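/- arXiv:0707.0593 — 2 statements merged into one kernel-verified Lean document; each statement's English description precedes it below -/
import Mathlib

section
/- Let $\beta = (1+\sqrt{5})/2$ and $L = \mathbb{Q}(\beta)$. The only solutions of the equation $X^4 + (8\beta - 12)X^3 + (16\beta - 30)X^2 + (8\beta - 12)X + 1 = Y^2$ with $X \in \mathbb{Q}$ and $Y \in L$ are $(X, Y) = (0, \pm 1)$. -/
open QuadraticAlgebra

/-- The ring `ℤ[(1+√5)/2]`. -/
abbrev GoldenInt : Type := QuadraticAlgebra ℤ 1 1

/-- The field `ℚ(√5)`, with `ℚ`-basis `1, (1+√5)/2`. -/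
abbrev GoldenField : Type := QuadraticAlgebra ℚ 1 1

instance : Fact (∀ r : ℚ, r ^ 2 ≠ 1 + 1 * r) := ⟨fun r hr => by
  have h5 : IsSquare (5 : ℚ) := ⟨2 * r - 1, by linear_combination -4 * hr⟩
  have : IsSquare ((5 : ℕ) : ℚ) := by exact_mod_cast h5
  rw [Rat.isSquare_natCast_iff] at this
  obtain ⟨k, hk⟩ := this
  have : k ≤ 2 := by nlinarith
  interval_cases k <;> omega⟩

namespace GoldenField

/-- The inclusion of the ring of integers. -/
def ofInt : GoldenInt →+* GoldenField where
  toFun z := ⟨z.re, z.im⟩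
  map_one' := by ext <;> simp
  map_mul' x y := by ext <;> simp
  map_zero' := by ext <;> simp
  map_add' x y := by ext <;> simp

lemma ofInt_injective : Function.Injective ofInt := fun x y h => by
  have h1 := congrArg QuadraticAlgebra.re h
  have h2 := congrArg QuadraticAlgebra.im h
  simp only [ofInt, RingHom.coe_mk, MonoidHom.coe_mk, OneHom.coe_mk, Int.cast_inj] at h1 h2
  exact QuadraticAlgebra.ext h1 h2

lemma ofInt_ne_zero {z : GoldenInt} (hz : z ≠ 0) : ofInt z ≠ 0 :=
  (map_ne_zero_iff _ ofInt_injective).2 hz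

@[simp] lemma ofInt_omega : ofInt ω = ω := by ext <;> simp [ofInt]

lemma omega_sq : (ω : GoldenField) ^ 2 = ω + 1 := by ext <;> simp [pow_two]

lemma exists_ofInt_div (x : GoldenField) : ∃ (n : ℤ) (z : GoldenInt), n ≠ 0 ∧ n * x = ofInt z := by
  refine ⟨x.re.den * x.im.den, ⟨x.re.num * x.im.den, x.im.num * x.re.den⟩, ?_, ?_⟩
  · positivity
  · ext
    · simp [ofInt]
      rw [mul_right_comm, mul_comm (x.re.den : ℚ), Rat.mul_den_eq_num]
    · simp [ofInt]
      rw [mul_assoc, mul_comm (x.im.den : ℚ), Rat.mul_den_eq_num, mul_comm]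

end GoldenField

namespace GoldenInt

open GoldenField

instance : IsDomain GoldenInt := ofInt_injective.isDomain

lemma omega_sq : (ω : GoldenInt) ^ 2 = ω + 1 := by ext <;> simp [pow_two]

lemma norm_ne_zero {z : GoldenInt} (hz : z ≠ 0) : z.norm ≠ 0 := by
  intro h
  have : (ofInt z).norm = 0 := by
    have h' : ((z.norm : ℤ) : ℚ) = 0 := by rw [h]; simp
    rw [norm_def] at h' ⊢
    simpa [ofInt] using h'
  exact ofInt_ne_zero hz (norm_eq_zero_iff_eq_zero.1 this)

lemma norm_omega : (ω : GoldenInt).norm = -1 := by simp [norm_def]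

lemma exists_norm_sub_mul_lt (x : GoldenInt) {y : GoldenInt} (hy : y ≠ 0) :
    ∃ q : GoldenInt, |(x - y * q).norm| < |y.norm| := by
  have hN := norm_ne_zero hy
  set N : ℚ := ((y.norm : ℤ) : ℚ) with hNdef
  have hN' : N ≠ 0 := Int.cast_ne_zero.2 hN
  set w := x * star y
  refine ⟨⟨round ((w.re : ℚ) / N), round ((w.im : ℚ) / N)⟩, ?_⟩
  set q : GoldenInt := ⟨round ((w.re : ℚ) / N), round ((w.im : ℚ) / N)⟩
  have h1 : |(w.re : ℚ) / N - q.re| ≤ 1 / 2 := abs_sub_round _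
  have h2 : |(w.im : ℚ) / N - q.im| ≤ 1 / 2 := abs_sub_round _
  have key : (((x - y * q).norm : ℤ) : ℚ) =
      N * (((w.re : ℚ) / N - q.re) ^ 2 + ((w.re : ℚ) / N - q.re) * ((w.im : ℚ) / N - q.im)
        - ((w.im : ℚ) / N - q.im) ^ 2) := by
    have e : ((y.norm : ℤ) : ℚ) * (x - y * q).norm =
        (w.re - N * q.re) ^ 2 + (w.re - N * q.re) * (w.im - N * q.im) - (w.im - N * q.im) ^ 2 := by
      have h3 : (y.norm : ℤ) * (x - y * q).norm = (w - (y.norm : ℤ) * q).norm := by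
        have h4 : w - (y.norm : ℤ) * q = (x - y * q) * star y := by
          have h5 : ((y.norm : ℤ) : GoldenInt) = y * star y := algebraMap_norm_eq_mul_star y
          rw [h5]; ring
        rw [h4, map_mul, QuadraticAlgebra.norm_star, mul_comm]
      rw [← Int.cast_mul, h3, norm_def]
      simp [hNdef]
      ring
    rw [← hNdef] at e
    field_simp
    linear_combination e
  have hlt : |((w.re : ℚ) / N - q.re) ^ 2 + ((w.re : ℚ) / N - q.re) * ((w.im : ℚ) / N - q.im)
        - ((w.im : ℚ) / N - q.im) ^ 2| < 1 := by
    rw [abs_le] at h1 h2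
    rw [abs_lt]
    constructor <;> nlinarith
  have : |(((x - y * q).norm : ℤ) : ℚ)| < |N| := by
    rw [key, abs_mul]
    exact mul_lt_of_lt_one_right (abs_pos.2 hN') hlt
  rw [hNdef] at this
  exact_mod_cast this

instance : IsPrincipalIdealRing GoldenInt := by
  classical
  let E : EuclideanDomain GoldenInt :=
    { (inferInstance : CommRing GoldenInt), (inferInstance : Nontrivial GoldenInt) with
      quotient := fun x y => if hy : y = 0 then 0 else (exists_norm_sub_mul_lt x hy).choose
      remainder := fun x y =>
        x - y * (if hy : y = 0 then 0 else (exists_norm_sub_mul_lt x hy).choose)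
      quotient_zero := by simp
      quotient_mul_add_remainder_eq := by simp
      r := fun x y => x.norm.natAbs < y.norm.natAbs
      r_wellFounded := (measure (fun z : GoldenInt => z.norm.natAbs)).wf
      remainder_lt := fun x y hy => by
        have := (exists_norm_sub_mul_lt x hy).choose_spec
        simp only [hy, dite_false]
        zify
        exact this
      mul_left_not_lt := fun x y hy => by
        have h1 : 1 ≤ y.norm.natAbs := Nat.one_le_iff_ne_zero.2 (by simpa using norm_ne_zero hy)
        rw [map_mul, Int.natAbs_mul, not_lt]
        exact Nat.le_mul_of_pos_right _ h1 }
  exact E.to_principal_ideal_domain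

lemma exists_eq_mul_sq_of_mul_eq_sq {a b c : GoldenInt} (ha : a ≠ 0) (h : a * b = c ^ 2) :
    ∃ g e n : GoldenInt, g ∣ a ∧ g ∣ b ∧ IsUnit e ∧ a = g * e * n ^ 2 := by
  obtain ⟨r, s, hrs⟩ := IsBezout.gcd_eq_sum a b
  set g := IsBezout.gcd a b
  obtain ⟨a', ha'⟩ : g ∣ a := IsBezout.gcd_dvd_left a b
  obtain ⟨b', hb'⟩ : g ∣ b := IsBezout.gcd_dvd_right a b
  have hg : g ≠ 0 := by rintro h0; rw [h0, zero_mul] at ha'; exact ha ha'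
  have hcop : IsCoprime a' b' := ⟨r, s, mul_left_cancel₀ hg (by
    linear_combination hrs - r * ha' - s * hb')⟩
  obtain ⟨c', hc'⟩ : g ∣ c := by
    rw [← IsIntegrallyClosed.pow_dvd_pow_iff two_ne_zero, ← h]
    exact ⟨a' * b', by rw [ha', hb']; ring⟩
  have h' : a' * b' = c' ^ 2 := by
    apply mul_left_cancel₀ (pow_ne_zero 2 hg)
    rw [ha', hb', hc'] at h
    linear_combination h
  obtain ⟨d, e, hd⟩ := exists_associated_pow_of_mul_eq_pow' hcop h'
  exact ⟨g, e, d, ⟨a', ha'⟩, ⟨b', hb'⟩, e.isUnit, by rw [ha', ← hd]; ring⟩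

lemma exists_ofInt_of_sq {x : GoldenField} {r : GoldenInt} (h : x ^ 2 = ofInt r) :
    ∃ z, x = ofInt z := by
  obtain ⟨n, p, hn, hp⟩ := exists_ofInt_div x
  have hn' : (n : GoldenField) ≠ 0 := by exact_mod_cast hn
  have : p ^ 2 = (n : GoldenInt) ^ 2 * r := ofInt_injective (by
    rw [map_mul, map_pow, map_pow, ← h, ← hp, map_intCast]; ring)
  obtain ⟨z, hz⟩ : (n : GoldenInt) ∣ p := by
    rw [← IsIntegrallyClosed.pow_dvd_pow_iff two_ne_zero]; exact ⟨r, this⟩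
  exact ⟨z, mul_left_cancel₀ hn' (by rw [hp, hz, map_mul, map_intCast])⟩

lemma exists_coprime_div (x : GoldenField) :
    ∃ p q : GoldenInt, q ≠ 0 ∧ IsCoprime p q ∧ x = ofInt p / ofInt q := by
  obtain ⟨n, z, hn, hz⟩ := exists_ofInt_div x
  obtain ⟨r, s, hrs⟩ := IsBezout.gcd_eq_sum z (n : GoldenInt)
  set g := IsBezout.gcd z (n : GoldenInt)
  obtain ⟨p, hp⟩ : g ∣ z := IsBezout.gcd_dvd_left _ _
  obtain ⟨q, hq⟩ : g ∣ (n : GoldenInt) := IsBezout.gcd_dvd_right _ _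
  have hn' : (n : GoldenInt) ≠ 0 := by exact_mod_cast hn
  have hg : g ≠ 0 := by rintro h0; rw [h0, zero_mul] at hq; exact hn' hq
  have hq0 : q ≠ 0 := by rintro h0; rw [h0, mul_zero] at hq; exact hn' hq
  refine ⟨p, q, hq0, ⟨r, s, mul_left_cancel₀ hg (by
    linear_combination hrs - r * hp - s * hq)⟩, ?_⟩
  rw [eq_div_iff (ofInt_ne_zero hq0)]
  apply mul_left_cancel₀ (ofInt_ne_zero hg)
  have : (n : GoldenField) = ofInt g * ofInt q := by rw [← map_mul, ← hq, map_intCast]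
  rw [← map_mul, ← hp, ← hz, this]; ring

lemma exists_sq_of_mul_omega {e : GoldenInt}
    (h : ∃ c n : GoldenInt, (c = 1 ∨ c = -1 ∨ c = ω ∨ c = -ω) ∧ e * ω = c * n ^ 2) :
    ∃ c n : GoldenInt, (c = 1 ∨ c = -1 ∨ c = ω ∨ c = -ω) ∧ e = c * n ^ 2 := by
  obtain ⟨c, n, hc, hn⟩ := h
  have h1 : e = c * n ^ 2 * (ω - 1) := by
    linear_combination (ω - 1) * hn - e * omega_sq
  rcases hc with rfl | rfl | rfl | rfl
  · exact ⟨ω, n * (ω - 1), by simp, by linear_combination h1 - n ^ 2 * (ω - 1) * omega_sq⟩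
  · exact ⟨-ω, n * (ω - 1), by simp, by linear_combination h1 + n ^ 2 * (ω - 1) * omega_sq⟩
  · exact ⟨1, n, by simp, by linear_combination h1 + n ^ 2 * omega_sq⟩
  · exact ⟨-1, n, by simp, by linear_combination h1 - n ^ 2 * omega_sq⟩

/-- Up to squares, the units of `ℤ[(1+√5)/2]` are `±1` and `±(1+√5)/2`. -/
lemma exists_sq_of_isUnit {e : GoldenInt} (he : IsUnit e) :
    ∃ c n : GoldenInt, (c = 1 ∨ c = -1 ∨ c = ω ∨ c = -ω) ∧ e = c * n ^ 2 := by
  have hω : IsUnit (ω : GoldenInt) := by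
    rw [isUnit_iff_norm_isUnit, norm_omega]; exact isUnit_one.neg
  induction hN : e.re.natAbs + e.im.natAbs using Nat.strong_induction_on generalizing e with
  | _ N ih =>
  subst hN
  have he' := he
  rw [isUnit_iff_norm_isUnit, Int.isUnit_iff, norm_def] at he'
  obtain ⟨a, b⟩ := e
  simp only [one_mul] at he' ih
  rcases eq_or_ne a 0 with rfl | ha
  · have hb : b = 1 ∨ b = -1 := by
      rw [← Int.isUnit_iff]
      refine isUnit_of_dvd_unit (Dvd.intro_left (-b) rfl) (Int.isUnit_iff.2 ?_)
      simpa using he'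
    rcases hb with rfl | rfl
    · exact ⟨ω, 1, by simp, by ext <;> simp⟩
    · exact ⟨-ω, 1, by simp, by ext <;> simp⟩
  rcases eq_or_ne b 0 with rfl | hb
  · have hb : a = 1 ∨ a = -1 := by
      rw [← Int.isUnit_iff]
      refine isUnit_of_dvd_unit (Dvd.intro_left a rfl) (Int.isUnit_iff.2 ?_)
      simpa using he'
    rcases hb with rfl | rfl
    · exact ⟨1, 1, by simp, by ext <;> simp⟩
    · exact ⟨-1, 1, by simp, by ext <;> simp⟩
  rcases lt_or_gt_of_ne (mul_ne_zero ha hb) with hab | hab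
  · refine exists_sq_of_mul_omega (ih _ ?_ (he.mul hω) rfl)
    simp only [re_mul, im_mul, omega_re, omega_im, mul_zero, mul_one, one_mul, zero_add]
    rcases lt_or_gt_of_ne ha with h | h
    · have h2 : b > 0 := by nlinarith
      have h3 : b < -2 * a := by by_contra! h3; rcases he' with h4 | h4 <;> nlinarith
      omega
    · have h2 : b < 0 := by nlinarith
      have h3 : -b < 2 * a := by by_contra! h3; rcases he' with h4 | h4 <;> nlinarith
      omega
  · have h1 : (⟨b - a, a⟩ : GoldenInt) * ω = ⟨a, b⟩ := by ext <;> simp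
    have h2 : IsUnit (⟨b - a, a⟩ : GoldenInt) := isUnit_of_mul_isUnit_left (h1 ▸ he)
    obtain ⟨c, n, hc, hn⟩ := ih _ (by
      simp only
      rcases lt_or_gt_of_ne ha with h | h
      · have h2 : b < 0 := by nlinarith
        have h3 : 2 * b < a := by by_contra! h3; rcases he' with h4 | h4 <;> nlinarith
        omega
      · have h2 : b > 0 := by nlinarith
        have h3 : a < 2 * b := by by_contra! h3; rcases he' with h4 | h4 <;> nlinarith
        omega) h2 rfl
    rw [← h1, hn]
    rcases hc with rfl | rfl | rfl | rfl
    · exact ⟨ω, n, by simp, by ring⟩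
    · exact ⟨-ω, n, by simp, by ring⟩
    · exact ⟨1, ω * n, by simp, by ring⟩
    · exact ⟨-1, ω * n, by simp, by ring⟩

lemma prime_three : Prime (3 : GoldenInt) := by
  rw [← irreducible_iff_prime]
  have h9 : (3 : GoldenInt).norm = 9 := by simp [norm_def]
  have hne : ∀ z : GoldenInt, z.norm.natAbs ≠ 3 := by
    rintro ⟨a, b⟩ h
    have h1 : ((a ^ 2 + a * b - b ^ 2 : ℤ) : ZMod 5) = 3 ∨
        ((a ^ 2 + a * b - b ^ 2 : ℤ) : ZMod 5) = -3 := by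
      simp only [norm_def, one_mul] at h
      rcases Int.natAbs_eq_iff.1 h with h | h
      · left; rw [show a ^ 2 + a * b - b ^ 2 = 3 by linear_combination h]; rfl
      · right; rw [show a ^ 2 + a * b - b ^ 2 = -3 by linear_combination h]; rfl
    push_cast at h1
    generalize (a : ZMod 5) = x at h1
    generalize (b : ZMod 5) = y at h1
    revert x y; decide
  refine ⟨by rw [isUnit_iff_norm_isUnit, h9]; decide, fun x y hxy => ?_⟩
  have h : x.norm.natAbs * y.norm.natAbs = 9 := by rw [← Int.natAbs_mul, ← map_mul, ← hxy, h9]; rfl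
  have hx : x.norm.natAbs ∣ 9 := ⟨_, h.symm⟩
  have hx' : x.norm.natAbs ≤ 9 := Nat.le_of_dvd (by norm_num) hx
  rw [isUnit_iff_norm_isUnit, isUnit_iff_norm_isUnit, Int.isUnit_iff_natAbs_eq,
    Int.isUnit_iff_natAbs_eq]
  have := hne x
  generalize x.norm.natAbs = p at *
  interval_cases p <;> omega

lemma norm_omega_add_two : (ω + 2 : GoldenInt).norm = 5 := by simp [norm_def]

lemma prime_omega_add_two : Prime (ω + 2 : GoldenInt) := by
  rw [← irreducible_iff_prime]
  refine ⟨by rw [isUnit_iff_norm_isUnit, norm_omega_add_two]; decide, fun x y hxy => ?_⟩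
  have h : x.norm.natAbs * y.norm.natAbs = 5 := by
    rw [← Int.natAbs_mul, ← map_mul, ← hxy, norm_omega_add_two]; rfl
  rw [isUnit_iff_norm_isUnit, isUnit_iff_norm_isUnit, Int.isUnit_iff_natAbs_eq,
    Int.isUnit_iff_natAbs_eq]
  exact Nat.prime_mul_iff.1 (h ▸ (by norm_num : Nat.Prime 5)) |>.imp And.right And.right |>.symm

lemma dvd_or_of_dvd_prime_mul {p g k : GoldenInt} (hp : Prime p) (h : g ∣ p * k) :
    g ∣ k ∨ ∃ g', g = p * g' ∧ g' ∣ k := by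
  by_cases hpg : p ∣ g
  · obtain ⟨g', rfl⟩ := hpg
    exact .inr ⟨g', rfl, (mul_dvd_mul_iff_left hp.ne_zero).1 h⟩
  · exact .inl (((hp.irreducible.coprime_iff_not_dvd).2 hpg).symm.dvd_of_dvd_mul_left h)

lemma eq_mul_unit_of_dvd {g : GoldenInt} (hg : g ∣ 3 * (ω + 2)) :
    ∃ d e : GoldenInt, (d = 1 ∨ d = 3 ∨ d = ω + 2 ∨ d = 3 * (ω + 2)) ∧ IsUnit e ∧ g = d * e := by
  rw [← mul_one (ω + 2)] at hg
  rcases dvd_or_of_dvd_prime_mul prime_three hg with hg' | ⟨g', rfl, hg'⟩ <;>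
  rcases dvd_or_of_dvd_prime_mul prime_omega_add_two hg' with h | ⟨g'', rfl, h⟩
  · exact ⟨1, g, by simp, isUnit_of_dvd_one h, by ring⟩
  · exact ⟨ω + 2, g'', by simp, isUnit_of_dvd_one h, by ring⟩
  · exact ⟨3, g', by simp, isUnit_of_dvd_one h, by ring⟩
  · exact ⟨3 * (ω + 2), g'', by simp, isUnit_of_dvd_one h, by ring⟩

/-- Reduction modulo the prime above `5`. -/
def toZModFive : GoldenInt →+* ZMod 5 :=
  (QuadraticAlgebra.lift (R := ℤ) (a := 1) (b := 1) ⟨(3 : ZMod 5), by decide⟩ :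
    GoldenInt →ₐ[ℤ] ZMod 5)

lemma toZModFive_apply (z : GoldenInt) : toZModFive z = z.re + 3 * z.im := by
  simp [toZModFive, QuadraticAlgebra.lift, mul_comm]

lemma omega_add_two_dvd {z : GoldenInt} (h : toZModFive z = 0) : ω + 2 ∣ z := by
  rw [toZModFive_apply] at h
  have h' : ((z.re + 3 * z.im : ℤ) : ZMod 5) = 0 := by push_cast; exact h
  obtain ⟨k, hk⟩ := (ZMod.intCast_zmod_eq_zero_iff_dvd _ 5).1 h'
  refine ⟨⟨3 * (k - z.im) + z.im, -(k - z.im)⟩, ?_⟩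
  push_cast at hk
  ext <;> simp <;> linarith

end GoldenInt

namespace GoldenField

open GoldenInt

lemma exists_ringHom_real {θ : ℝ} (hθ : θ ^ 2 = θ + 1) :
    ∃ φ : GoldenField →+* ℝ, φ ω = θ ∧ ∀ x, φ x = x.re + x.im * θ := by
  let φ : GoldenField →ₐ[ℚ] ℝ := QuadraticAlgebra.lift ⟨θ, by simp; linarith⟩
  have h : ∀ x, φ x = x.re + x.im * θ := fun x => by
    simp [φ, QuadraticAlgebra.lift, Algebra.smul_def]; rfl
  exact ⟨φ, by simpa using h ω, h⟩

/-- Descent on `y² = x (x - 3) (x - (β + 2))`, first coordinate. -/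
lemma exists_eq_mul_sq_of_curve {x y : GoldenField} (hy : y ≠ 0)
    (h : y ^ 2 = x * (x - 3) * (x - (ω + 2))) :
    ∃ d n, (d = 1 ∨ d = 3 ∨ d = ω + 2 ∨ d = 3 * (ω + 2)) ∧ x = d * n ^ 2 := by
  obtain ⟨r, t, ht, hrt, rfl⟩ := exists_coprime_div x
  have ht' := ofInt_ne_zero ht
  have hY : (y * ofInt t ^ 2) ^ 2 = ofInt (r * t * ((r - 3 * t) * (r - (ω + 2) * t))) := by
    simp only [map_mul, map_sub, map_add, ofInt_omega, map_ofNat]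
    rw [mul_pow, h]; field_simp
  obtain ⟨c, hc⟩ := exists_ofInt_of_sq hY
  have hab : r * t * ((r - 3 * t) * (r - (ω + 2) * t)) = c ^ 2 :=
    ofInt_injective (by rw [← hY, hc, map_pow])
  have hr : r ≠ 0 := by
    rintro rfl
    exact hy (by simpa using h)
  obtain ⟨g, e, n, hg1, hg2, he, hn⟩ := exists_eq_mul_sq_of_mul_eq_sq (mul_ne_zero hr ht) hab
  have hgt : IsCoprime g t := by
    refine IsCoprime.of_isCoprime_of_dvd_left ?_ hg2
    have : (r - 3 * t) * (r - (ω + 2) * t) = r ^ 2 + t * (-3 * r - (ω + 2) * r + 3 * (ω + 2) * t) := by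
      ring
    rw [this]
    exact (IsCoprime.pow_left hrt).add_mul_left_left _
  have hgr : g ∣ r := hgt.dvd_of_dvd_mul_right hg1
  have hg : g ∣ 3 * (ω + 2) := by
    have h1 : g ∣ 3 * (ω + 2) * t ^ 2 := by
      have h2 : 3 * (ω + 2) * t ^ 2 =
          (r - 3 * t) * (r - (ω + 2) * t) - r * (r - 3 * t - (ω + 2) * t) := by ring
      rw [h2]
      exact dvd_sub hg2 (hgr.mul_right _)
    exact (IsCoprime.pow_right hgt).dvd_of_dvd_mul_right h1
  obtain ⟨d, e', hd, he', rfl⟩ := eq_mul_unit_of_dvd hg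
  obtain ⟨k, m, hk, hm⟩ := exists_sq_of_isUnit (he'.mul he)
  have hx : ofInt r / ofInt t = ofInt k * ofInt d * (ofInt (m * n) / ofInt t) ^ 2 := by
    have : ofInt r * ofInt t = ofInt k * ofInt d * ofInt (m * n) ^ 2 := by
      simp only [← map_mul, ← map_pow]; congr 1; linear_combination hn + d * n ^ 2 * hm
    field_simp
    exact this
  have hpos : ∀ θ : ℝ, θ ^ 2 = θ + 1 → 0 < θ + 2 → ∀ φ : GoldenField →+* ℝ, φ ω = θ →
      0 < φ (ofInt k) * φ (ofInt d) := by
    intro θ hθ hθ2 φ hφ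
    have h1 : 0 < φ y ^ 2 := by have := (map_ne_zero φ).2 hy; positivity
    rw [← map_pow, h] at h1
    simp only [map_mul, map_sub, map_add, hφ, map_ofNat] at h1
    have h2 : 0 < φ (ofInt r / ofInt t) := by
      by_contra! h2
      have := mul_nonneg_of_nonpos_of_nonpos (a := φ (ofInt r / ofInt t) - 3)
        (b := φ (ofInt r / ofInt t) - (θ + 2)) (by linarith) (by linarith)
      nlinarith
    rw [hx, map_mul, map_pow, map_mul] at h2
    exact pos_of_mul_pos_left h2 (sq_nonneg _)
  have h5 : Real.sqrt 5 ^ 2 = 5 := Real.sq_sqrt (by norm_num)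
  have h51 : 2 < Real.sqrt 5 := by rw [Real.lt_sqrt] <;> norm_num
  have h52 : Real.sqrt 5 < 3 := by rw [Real.sqrt_lt'] <;> norm_num
  have hθ₁ : ((1 + Real.sqrt 5) / 2) ^ 2 = (1 + Real.sqrt 5) / 2 + 1 := by linear_combination h5 / 4
  have hθ₂ : ((1 - Real.sqrt 5) / 2) ^ 2 = (1 - Real.sqrt 5) / 2 + 1 := by linear_combination h5 / 4
  obtain ⟨φ₁, hφ₁, -⟩ := exists_ringHom_real hθ₁
  obtain ⟨φ₂, hφ₂, -⟩ := exists_ringHom_real hθ₂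
  have hp₁ := hpos _ hθ₁ (by linarith) φ₁ hφ₁
  have hp₂ := hpos _ hθ₂ (by linarith) φ₂ hφ₂
  have hd_pos : ∀ θ : ℝ, 0 < θ + 2 → ∀ φ : GoldenField →+* ℝ, φ ω = θ → 0 < φ (ofInt d) := by
    intro θ hθ φ hφ
    rcases hd with rfl | rfl | rfl | rfl <;> simp only [map_mul, map_add, map_one, map_ofNat, ofInt_omega, hφ] <;> linarith
  replace hp₁ := pos_of_mul_pos_left hp₁ (hd_pos _ (by linarith) φ₁ hφ₁).le
  replace hp₂ := pos_of_mul_pos_left hp₂ (hd_pos _ (by linarith) φ₂ hφ₂).le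
  refine ⟨ofInt d, ofInt (m * n) / ofInt t, ?_, ?_⟩
  · rcases hd with rfl | rfl | rfl | rfl <;> simp [map_ofNat]
  · rcases hk with rfl | rfl | rfl | rfl
    · simpa using hx
    · simp at hp₁; linarith
    · simp [hφ₂] at hp₂; linarith
    · simp [hφ₁] at hp₁; linarith

/-- Descent on `y² = x (x - 3) (x - (β + 2))`, second coordinate, when the first is a square. -/
lemma exists_sq_sub_three_eq {a c : GoldenField} (h : (a ^ 2 - 3) * (a ^ 2 - (ω + 2)) = c ^ 2) :
    ∃ b, a ^ 2 - 3 = b ^ 2 ∨ a ^ 2 - 3 = -b ^ 2 := by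
  obtain ⟨U, W, hW, hUW, rfl⟩ := exists_coprime_div a
  have hW' := ofInt_ne_zero hW
  have hY : (c * ofInt W ^ 2) ^ 2 =
      ofInt ((U ^ 2 - 3 * W ^ 2) * (U ^ 2 - (ω + 2) * W ^ 2)) := by
    simp only [map_mul, map_sub, map_add, ofInt_omega, map_ofNat, map_pow]
    rw [mul_pow, ← h]; field_simp
  obtain ⟨C, hC⟩ := exists_ofInt_of_sq hY
  have hab : (U ^ 2 - 3 * W ^ 2) * (U ^ 2 - (ω + 2) * W ^ 2) = C ^ 2 :=
    ofInt_injective (by rw [← hY, hC, map_pow])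
  have hfin : ∀ n : GoldenInt, U ^ 2 - 3 * W ^ 2 = n ^ 2 ∨ U ^ 2 - 3 * W ^ 2 = -n ^ 2 →
      ∃ b, (ofInt U / ofInt W) ^ 2 - 3 = b ^ 2 ∨ (ofInt U / ofInt W) ^ 2 - 3 = -b ^ 2 := by
    intro n hn
    refine ⟨ofInt n / ofInt W, hn.imp (fun hn => ?_) (fun hn => ?_)⟩ <;>
    · have := congrArg ofInt hn
      simp only [map_mul, map_sub, map_neg, map_ofNat, map_pow] at this
      field_simp
      linear_combination this
  by_cases hA : U ^ 2 - 3 * W ^ 2 = 0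
  · exact hfin 0 (by simp [hA])
  obtain ⟨g, e, n, hg1, hg2, he, hn⟩ := exists_eq_mul_sq_of_mul_eq_sq hA hab
  have hg : IsUnit g := by
    have h1 : g ∣ W ^ 2 := by
      have : W ^ 2 = ω * ((U ^ 2 - 3 * W ^ 2) - (U ^ 2 - (ω + 2) * W ^ 2)) := by
        linear_combination -W ^ 2 * GoldenInt.omega_sq
      rw [this]
      exact (dvd_sub hg1 hg2).mul_left _
    have h2 : g ∣ U ^ 2 := by
      have : U ^ 2 = (U ^ 2 - 3 * W ^ 2) + 3 * W ^ 2 := by ring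
      rw [this]
      exact dvd_add hg1 (h1.mul_left _)
    exact (IsCoprime.pow hUW).isUnit_of_dvd' h2 h1
  obtain ⟨k, m, hk, hm⟩ := exists_sq_of_isUnit (hg.mul he)
  have hn' : U ^ 2 - 3 * W ^ 2 = k * (m * n) ^ 2 := by rw [hn, hm]; ring
  have hmn : m * n ≠ 0 := fun h0 => hA (by rw [hn', h0]; ring)
  obtain ⟨C', hC'⟩ : m * n ∣ C := by
    rw [← IsIntegrallyClosed.pow_dvd_pow_iff two_ne_zero, ← hab, hn']
    exact ⟨k * (U ^ 2 - (ω + 2) * W ^ 2), by ring⟩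
  have hB : k * (U ^ 2 - (ω + 2) * W ^ 2) = C' ^ 2 := by
    apply mul_left_cancel₀ (pow_ne_zero 2 hmn)
    rw [hn', hC'] at hab
    linear_combination hab
  have hcontra : (toZModFive k = 3 ∨ toZModFive k = -3) → False := by
    intro hk5
    have h5 : toZModFive (ω + 2) = 0 := by rw [toZModFive_apply]; simp; decide
    have h1 := congrArg toZModFive hB
    simp only [map_mul, map_sub, map_pow, h5] at h1
    have h2 : toZModFive U = 0 ∧ toZModFive C' = 0 := by
      generalize toZModFive U = u at *
      generalize toZModFive C' = v at *
      generalize toZModFive W = w at *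
      generalize toZModFive k = κ at *
      revert u v w κ; decide
    obtain ⟨U', hU'⟩ := omega_add_two_dvd h2.1
    obtain ⟨C'', hC''⟩ := omega_add_two_dvd h2.2
    have hp := prime_omega_add_two
    have h3 : ω + 2 ∣ k * W ^ 2 := by
      refine ⟨k * U' ^ 2 - C'' ^ 2, ?_⟩
      apply mul_left_cancel₀ hp.ne_zero
      rw [hU', hC''] at hB
      linear_combination -hB
    rcases hp.dvd_or_dvd h3 with h4 | h4
    · obtain ⟨z, hz⟩ := h4
      rw [hz, map_mul, h5] at hk5
      rcases hk5 with h | h <;> rw [zero_mul] at h <;> revert h <;> decide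
    · exact hp.not_isUnit (hUW.isUnit_of_dvd' ⟨U', hU'⟩ (hp.dvd_of_dvd_pow h4))
  rcases hk with rfl | rfl | rfl | rfl
  · exact hfin (m * n) (.inl (by rw [hn']; ring))
  · exact hfin (m * n) (.inr (by rw [hn']; ring))
  · exact (hcontra (.inl (by rw [toZModFive_apply]; simp))).elim
  · exact (hcontra (.inr (by rw [toZModFive_apply]; simp))).elim

end GoldenField

/-- The ring `(ℤ/2ᵏ)[(1+√5)/2]`. -/
abbrev GoldenMod (k : ℕ) : Type := QuadraticAlgebra (ZMod (2 ^ k)) 1 1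

namespace GoldenMod

instance (k : ℕ) : Fintype (GoldenMod k) := Fintype.ofEquiv _ (QuadraticAlgebra.equivProd _ _).symm

/-- Reduction modulo `2ᵏ` on the ring of integers. -/
def reduce (k : ℕ) : GoldenInt →+* GoldenMod k where
  toFun z := ⟨z.re, z.im⟩
  map_one' := by ext <;> simp
  map_mul' x y := by ext <;> simp
  map_zero' := by ext <;> simp
  map_add' x y := by ext <;> simp

lemma reduce_omega (k : ℕ) : reduce k ω = ω := by ext <;> simp [reduce]

lemma exists_of_reduce_eq_zero {k : ℕ} {z : GoldenInt} (h : reduce k z = 0) :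
    ∃ w, z = 2 ^ k * w := by
  have h1 : ((z.re : ℤ) : ZMod (2 ^ k)) = 0 := congrArg QuadraticAlgebra.re h
  have h2 : ((z.im : ℤ) : ZMod (2 ^ k)) = 0 := congrArg QuadraticAlgebra.im h
  obtain ⟨a, ha⟩ := (ZMod.intCast_zmod_eq_zero_iff_dvd _ _).1 h1
  obtain ⟨b, hb⟩ := (ZMod.intCast_zmod_eq_zero_iff_dvd _ _).1 h2
  refine ⟨⟨a, b⟩, ?_⟩
  have h3 : (2 ^ k : GoldenInt) = ((2 ^ k : ℤ) : GoldenInt) := by push_cast; rfl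
  rw [h3, ← zsmul_eq_mul]
  ext
  · simpa using ha
  · simpa using hb

lemma isUnit_intCast (k : ℕ) {n : ℤ} (hn : Odd n) : IsUnit (n : GoldenMod k) := by
  have h : IsCoprime n (2 ^ k) := (Int.isCoprime_iff_gcd_eq_one.2 (Int.isCoprime_iff_gcd_eq_one.1
    (by rw [Int.isCoprime_iff_gcd_eq_one, Int.gcd_comm, ← Int.isCoprime_iff_gcd_eq_one]; exact
      (Int.isCoprime_two_left.2 hn)))).pow_right
  obtain ⟨a, b, hab⟩ := h
  refine IsUnit.of_mul_eq_one (a : GoldenMod k) ?_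
  have h2 : ((2 : ℤ) ^ k : ZMod (2 ^ k)) = 0 := by
    have := ZMod.natCast_self (2 ^ k)
    push_cast at this ⊢; exact this
  have h1 := congrArg (fun z : ℤ => (z : ZMod (2 ^ k))) hab
  push_cast at h1 h2
  rw [h2, mul_zero, add_zero] at h1
  ext
  · simpa [mul_comm] using h1
  · simp

end GoldenMod

namespace GoldenField

open GoldenInt

/-- The localization at `2` of the ring of integers. -/
def twoIntegers : Subring GoldenField where
  carrier := {x | ∃ (n : ℤ) (z : GoldenInt), Odd n ∧ n * x = ofInt z}
  mul_mem' := by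
    rintro x y ⟨n, z, hn, hz⟩ ⟨m, w, hm, hw⟩
    exact ⟨n * m, z * w, hn.mul hm, by
      push_cast; rw [map_mul, ← hz, ← hw]; ring⟩
  one_mem' := ⟨1, 1, odd_one, by simp⟩
  add_mem' := by
    rintro x y ⟨n, z, hn, hz⟩ ⟨m, w, hm, hw⟩
    exact ⟨n * m, m * z + n * w, hn.mul hm, by
      simp only [map_add, map_mul, map_intCast, ← hz, ← hw]; push_cast; ring⟩
  zero_mem' := ⟨1, 0, odd_one, by simp⟩
  neg_mem' := by
    rintro x ⟨n, z, hn, hz⟩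
    exact ⟨n, -z, hn, by rw [map_neg, ← hz]; ring⟩

lemma ofInt_mem (z : GoldenInt) : ofInt z ∈ twoIntegers := ⟨1, z, odd_one, by simp⟩

@[simp, norm_cast] lemma coe_ofNat_twoIntegers (n : ℕ) [n.AtLeastTwo] :
    ((ofNat(n) : twoIntegers) : GoldenField) = ofNat(n) := rfl

/-- The golden ratio as a `2`-integer. -/
def twoOmega : twoIntegers := ⟨ω, ofInt_omega ▸ ofInt_mem ω⟩

@[simp] lemma coe_twoOmega : (twoOmega : GoldenField) = ω := rfl

lemma exists_reduce (k : ℕ) (x : twoIntegers) : ∃ t : GoldenMod k,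
    ∀ (n : ℤ) (z : GoldenInt), Odd n → n * (x : GoldenField) = ofInt z →
      n * t = GoldenMod.reduce k z := by
  obtain ⟨x, m, w, hm, hw⟩ := x
  obtain ⟨u, hu⟩ := GoldenMod.isUnit_intCast k hm
  refine ⟨↑u⁻¹ * GoldenMod.reduce k w, fun n z hn hz => u.mul_right_inj.1 ?_⟩
  have h : n * w = m * z := ofInt_injective (by
    simp only [map_mul, map_intCast, ← hz, ← hw]; ring)
  have h' := congrArg (GoldenMod.reduce k) h
  simp only [map_mul, map_intCast] at h'
  rw [mul_left_comm, Units.mul_inv_cancel_left, hu, h']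

/-- Reduction modulo `2ᵏ` on the `2`-integers. -/
noncomputable def reduce (k : ℕ) : twoIntegers →+* GoldenMod k where
  toFun x := (exists_reduce k x).choose
  map_one' := by
    simpa using (exists_reduce k 1).choose_spec 1 1 odd_one (by simp)
  map_zero' := by
    simpa using (exists_reduce k 0).choose_spec 1 0 odd_one (by simp)
  map_mul' x y := by
    obtain ⟨n, z, hn, hz⟩ := x.2
    obtain ⟨m, w, hm, hw⟩ := y.2
    apply (GoldenMod.isUnit_intCast k (hn.mul hm)).mul_left_cancel
    rw [(exists_reduce k (x * y)).choose_spec (n * m) (z * w) (hn.mul hm)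
      (by push_cast; rw [map_mul, ← hz, ← hw]; ring), map_mul,
      ← (exists_reduce k x).choose_spec n z hn hz, ← (exists_reduce k y).choose_spec m w hm hw]
    push_cast; ring
  map_add' x y := by
    obtain ⟨n, z, hn, hz⟩ := x.2
    obtain ⟨m, w, hm, hw⟩ := y.2
    apply (GoldenMod.isUnit_intCast k (hn.mul hm)).mul_left_cancel
    rw [(exists_reduce k (x + y)).choose_spec (n * m) (m * z + n * w) (hn.mul hm)
      (by simp only [map_add, map_mul, map_intCast, ← hz, ← hw]; push_cast; ring), map_add,
      map_mul, map_mul, map_intCast, map_intCast,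
      ← (exists_reduce k x).choose_spec n z hn hz, ← (exists_reduce k y).choose_spec m w hm hw]
    push_cast; ring

lemma intCast_mul_reduce (k : ℕ) {x : twoIntegers} {n : ℤ} {z : GoldenInt} (hn : Odd n)
    (hz : n * (x : GoldenField) = ofInt z) : n * reduce k x = GoldenMod.reduce k z :=
  (exists_reduce k x).choose_spec n z hn hz

@[simp] lemma reduce_twoOmega (k : ℕ) : reduce k twoOmega = ω := by
  simpa [GoldenMod.reduce_omega] using
    intCast_mul_reduce k (x := twoOmega) (n := 1) (z := ω) odd_one (by simp)

@[simp] lemma reduce_ofNat (k n : ℕ) [n.AtLeastTwo] : reduce k ofNat(n) = ofNat(n) :=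
  map_ofNat _ _

lemma exists_of_reduce_eq_zero {k : ℕ} {x : twoIntegers} (h : reduce k x = 0) :
    ∃ r, x = 2 ^ k * r := by
  obtain ⟨x, n, z, hn, hz⟩ := x
  have h1 := intCast_mul_reduce k (x := ⟨x, n, z, hn, hz⟩) hn hz
  rw [h, mul_zero] at h1
  obtain ⟨w, hw⟩ := GoldenMod.exists_of_reduce_eq_zero h1.symm
  have h2 : (n : GoldenField) * (x / 2 ^ k) = ofInt w := by
    rw [← mul_div_assoc, hz, hw]; simp [map_ofNat]
  refine ⟨⟨x / 2 ^ k, n, w, hn, h2⟩, Subtype.ext ?_⟩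
  push_cast
  have : (2 : GoldenField) ≠ 0 := two_ne_zero
  change x = 2 ^ k * (x / 2 ^ k)
  field_simp

lemma exists_of_reduce_eq {k : ℕ} {x y : twoIntegers} (h : reduce k x = reduce k y) :
    ∃ r, x = y + 2 ^ k * r := by
  obtain ⟨r, hr⟩ := exists_of_reduce_eq_zero (k := k) (x := x - y) (by rw [map_sub, h, sub_self])
  exact ⟨r, by rw [← hr]; ring⟩

lemma mem_of_sq_mem {x : GoldenField} (h : x ^ 2 ∈ twoIntegers) : x ∈ twoIntegers := by
  obtain ⟨n, z, hn, hz⟩ := h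
  obtain ⟨w, hw⟩ := exists_ofInt_of_sq (x := n * x) (r := n * z) (by
    rw [map_mul, ← hz, map_intCast]; ring)
  exact ⟨n, w, hn, hw⟩

/-- `x` has `2`-adic valuation `k` and leading coefficient `c`. -/
def HasLead (x : GoldenField) (k : ℤ) (c : GoldenMod 1) : Prop :=
  c ≠ 0 ∧ ∃ e : twoIntegers, x = 2 ^ k * e ∧ reduce 1 e = c

namespace HasLead

variable {x y : GoldenField} {k l : ℤ} {c d : GoldenMod 1}

lemma mul (hx : HasLead x k c) (hy : HasLead y l d) : HasLead (x * y) (k + l) (c * d) := by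
  obtain ⟨hc, e, rfl, rfl⟩ := hx
  obtain ⟨hd, f, rfl, rfl⟩ := hy
  refine ⟨?_, e * f, ?_, map_mul _ _ _⟩
  · generalize reduce 1 e = c at *
    generalize reduce 1 f = d at *
    revert c d; decide
  · rw [zpow_add₀ two_ne_zero]; push_cast; ring

lemma neg (hx : HasLead x k c) : HasLead (-x) k c := by
  obtain ⟨hc, e, rfl, rfl⟩ := hx
  refine ⟨hc, -e, by push_cast; ring, ?_⟩
  rw [map_neg]
  generalize reduce 1 e = c
  revert c; decide

lemma inv (hx : HasLead x k c) : HasLead x⁻¹ (-k) (c ^ 2) := by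
  obtain ⟨hc, ⟨e, n, z, hn, hz⟩, rfl, rfl⟩ := hx
  set c := reduce 1 ⟨e, n, z, hn, hz⟩ with hcdef
  have h1 : n * c = GoldenMod.reduce 1 z := intCast_mul_reduce 1 hn hz
  have hn1 : (n : GoldenMod 1) = 1 := by
    obtain ⟨j, rfl⟩ := hn
    push_cast
    rw [show (2 : GoldenMod 1) = 0 by decide, zero_mul, zero_add]
  have hN : Odd z.norm := by
    rw [hn1, one_mul] at h1
    have h2 : (z.norm : ZMod 2) = 1 := by
      rw [norm_def]
      have h3 : c = ⟨(z.re : ZMod 2), (z.im : ZMod 2)⟩ := h1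
      push_cast
      rw [h3] at hc
      generalize (z.re : ZMod 2) = s at *
      generalize (z.im : ZMod 2) = t at *
      clear h1 h3
      revert s t; decide
    rwa [← ZMod.intCast_eq_one_iff_odd]
  have hz0 : z ≠ 0 := by rintro rfl; simp at hN
  have hN' : ofInt z * ofInt (star z) = (z.norm : GoldenField) := by
    rw [← map_mul, ← algebraMap_norm_eq_mul_star]; simp
  have hn0 : (n : GoldenField) ≠ 0 := by
    have : n ≠ 0 := by rintro rfl; simp at hn
    exact_mod_cast this
  have he0 : e ≠ 0 := by rintro rfl; rw [mul_zero] at hz; exact ofInt_ne_zero hz0 hz.symm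
  have hmem : (z.norm : GoldenField) * e⁻¹ = ofInt (n * star z) := by
    rw [← hN', ← hz, map_mul, map_intCast]; field_simp
  set f : twoIntegers := ⟨e⁻¹, _, _, hN, hmem⟩
  have hef : (⟨e, n, z, hn, hz⟩ : twoIntegers) * f = 1 := Subtype.ext (mul_inv_cancel₀ he0)
  have hcd : c * reduce 1 f = 1 := by rw [hcdef, ← map_mul, hef, map_one]
  have hcd' : reduce 1 f = c ^ 2 := by
    generalize reduce 1 f = d at *
    generalize c = c at *
    clear h1 hcdef
    revert c d; decide
  refine ⟨?_, f, ?_, hcd'⟩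
  · generalize c = c at *
    clear h1 hcdef hcd hcd'
    revert c; decide
  · rw [mul_inv, zpow_neg]

lemma unique (hx : HasLead x k c) (hx' : HasLead x l d) : k = l ∧ c = d := by
  wlog h : k ≤ l generalizing k l c d
  · exact (this hx' hx (by omega)).imp Eq.symm Eq.symm
  obtain ⟨hc, e, rfl, rfl⟩ := hx
  obtain ⟨hd, f, he, rfl⟩ := hx'
  obtain ⟨j, rfl⟩ := Int.le.dest h
  have h1 : e = 2 ^ j * f := Subtype.ext (by
    rw [zpow_add₀ two_ne_zero, mul_assoc] at he
    have h2 : (e : GoldenField) = 2 ^ j * f := by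
      simpa using mul_left_cancel₀ (zpow_ne_zero _ two_ne_zero) he
    exact h2)
  rcases j with _ | j
  · rw [pow_zero, one_mul] at h1
    exact ⟨by simp, by rw [h1]⟩
  · refine (hc ?_).elim
    rw [h1, map_mul, map_pow, map_ofNat, show (2 : GoldenMod 1) = 0 by decide]
    simp

lemma ne_zero (hx : HasLead x k c) : x ≠ 0 := by
  obtain ⟨hc, e, rfl, rfl⟩ := hx
  refine mul_ne_zero (zpow_ne_zero _ two_ne_zero) fun h => hc ?_
  rw [show e = 0 from Subtype.ext h, map_zero]

lemma mem (hx : HasLead x k c) (hk : 0 ≤ k) : x ∈ twoIntegers := by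
  obtain ⟨hc, e, rfl, rfl⟩ := hx
  lift k to ℕ using hk
  rw [zpow_natCast]
  exact (2 ^ k * e).2

end HasLead

lemma hasLead_two : HasLead 2 1 1 := ⟨by decide, 1, by simp, map_one _⟩

lemma hasLead_coe {x : twoIntegers} (hx : reduce 1 x ≠ 0) : HasLead x 0 (reduce 1 x) :=
  ⟨hx, x, by simp, rfl⟩

lemma hasLead_ofInt {z : GoldenInt} (hz : z ≠ 0) : ∃ k c, HasLead (ofInt z) k c := by
  have hfin : FiniteMultiplicity (2 : GoldenInt) z := by
    apply FiniteMultiplicity.of_not_isUnit _ hz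
    rw [isUnit_iff_norm_isUnit]
    simp [norm_def]; decide
  obtain ⟨w, hw, hndvd⟩ := hfin.exists_eq_pow_mul_and_not_dvd
  refine ⟨multiplicity 2 z, reduce 1 ⟨ofInt w, ofInt_mem w⟩, fun h => hndvd ?_,
    ⟨ofInt w, ofInt_mem w⟩, ?_, rfl⟩
  · have h1 := intCast_mul_reduce 1 (x := ⟨ofInt w, ofInt_mem w⟩) (n := 1) odd_one (by simp; rfl)
    rw [h, mul_zero] at h1
    obtain ⟨v, hv⟩ := GoldenMod.exists_of_reduce_eq_zero h1.symm
    exact ⟨v, by simpa using hv⟩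
  · conv_lhs => rw [hw]
    simp [map_ofNat]

lemma exists_hasLead {x : GoldenField} (hx : x ≠ 0) : ∃ k c, HasLead x k c := by
  obtain ⟨n, z, hn, hz⟩ := exists_ofInt_div x
  have hn' : (n : GoldenInt) ≠ 0 := by exact_mod_cast hn
  have hn'' : ofInt n ≠ 0 := ofInt_ne_zero hn'
  have hxz : x = (ofInt n)⁻¹ * ofInt z := by
    rw [← hz, map_intCast]; rw [map_intCast] at hn''; field_simp
  have hz0 : z ≠ 0 := by
    rintro rfl; exact hx (by rw [hxz, map_zero, mul_zero])
  obtain ⟨k, c, h⟩ := hasLead_ofInt hn'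
  obtain ⟨l, d, h'⟩ := hasLead_ofInt hz0
  exact ⟨_, _, hxz ▸ h.inv.mul h'⟩

lemma reduce_one_of_im_eq_zero {x : twoIntegers} (hx : (x : GoldenField).im = 0) :
    reduce 1 x = 0 ∨ reduce 1 x = 1 := by
  obtain ⟨x, n, z, hn, hz⟩ := x
  have h1 : n * reduce 1 ⟨x, n, z, hn, hz⟩ = GoldenMod.reduce 1 z := intCast_mul_reduce 1 hn hz
  have hn1 : (n : GoldenMod 1) = 1 := by
    obtain ⟨j, rfl⟩ := hn
    push_cast
    rw [show (2 : GoldenMod 1) = 0 by decide, zero_mul, zero_add]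
  rw [hn1, one_mul] at h1
  have h2 : z.im = 0 := by
    have h3 := congrArg QuadraticAlgebra.im hz
    simp only at hx
    simp [hx, ofInt] at h3
    exact_mod_cast h3.symm
  have h3 : (reduce 1 ⟨x, n, z, hn, hz⟩).im = 0 := by rw [h1]; simp [GoldenMod.reduce, h2]
  generalize reduce 1 ⟨x, n, z, hn, hz⟩ = c at h3
  revert c; decide

lemma HasLead.eq_one_of_im_eq_zero {x : GoldenField} {k : ℤ} {c : GoldenMod 1}
    (h : HasLead x k c) (hx : x.im = 0) : c = 1 := by
  obtain ⟨hc, e, he, rfl⟩ := h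
  refine (reduce_one_of_im_eq_zero ?_).resolve_left hc
  have h2 : (e : GoldenField) = (2 ^ (-k) : ℚ) • x := by
    rw [he, Algebra.smul_def, map_zpow₀, map_ofNat, ← mul_assoc, ← zpow_add₀ two_ne_zero]; simp
  rw [h2]
  simp [hx]

section Descent

variable {u v w : GoldenField}

lemma exists_descent_of_eq_sq {a : GoldenField} (hv : u ^ 2 - v ^ 2 = 3)
    (hw : u ^ 2 - w ^ 2 = ω + 2) (ha : (u + v) * (u + w) = a ^ 2) :
    ∃ b c, a * b * c ≠ 0 ∧
      ((a ^ 2 - b ^ 2 = 3 ∧ a ^ 2 - c ^ 2 = ω + 2) ∨ (a ^ 2 + b ^ 2 = 3 ∧ a ^ 2 + c ^ 2 = ω + 2)) ∧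
      u * (2 * (a * b * c)) = a ^ 4 - 3 * (ω + 2) := by
  have h3 : a ^ 2 - 3 = (u + v) * (v + w) := by linear_combination -ha + hv
  have hσ : a ^ 2 - (ω + 2) = (u + w) * (v + w) := by linear_combination -ha + hw
  have hA : u + v ≠ 0 := fun h => three_ne_zero (α := GoldenField)
    (by linear_combination (u - v) * h - hv)
  have hB : u + w ≠ 0 := fun h => by
    have h0 : (ω + 2 : GoldenField) = 0 := by linear_combination (u - w) * h - hw
    have := congrArg QuadraticAlgebra.im h0
    simp at this
  have hC : v + w ≠ 0 := fun h => by
    have h0 : (ω - 1 : GoldenField) = 0 := by linear_combination (v - w) * h + hv - hw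
    have := congrArg QuadraticAlgebra.im h0
    simp at this
  have ha0 : a ≠ 0 := by rintro rfl; exact mul_ne_zero hA hB (by rw [ha]; ring)
  obtain ⟨b, hb⟩ := exists_sq_sub_three_eq (a := a) (c := a * (v + w))
    (by rw [h3, hσ]; linear_combination (v + w) ^ 2 * ha)
  have hb0 : b ≠ 0 := by
    rintro rfl
    refine mul_ne_zero hA hC ?_
    rw [← h3]; rcases hb with hb | hb <;> rw [hb] <;> ring
  have hu : u * (2 * (a * b * (a * (v + w) / b))) = a ^ 4 - 3 * (ω + 2) := by
    have : a * b * (a * (v + w) / b) = a ^ 2 * (v + w) := by field_simp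
    rw [this, ← hv, ← hw]
    linear_combination -(2 * u * (v + w) - (u + v) * (u + w) - a ^ 2) * ha
  refine ⟨b, a * (v + w) / b, ?_, hb.imp (fun hb => ⟨by linear_combination hb, ?_⟩)
    (fun hb => ⟨by linear_combination hb, ?_⟩), hu⟩
  · have := mul_ne_zero (pow_ne_zero 2 ha0) hC
    convert this using 1; field_simp
  · have h1 : (a ^ 2 - (ω + 2)) * b ^ 2 = (a * (v + w)) ^ 2 := by
      rw [← hb, h3, hσ]; linear_combination (v + w) ^ 2 * ha
    rw [div_pow, ← h1]; field_simp; ring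
  · have h1 : -(a ^ 2 - (ω + 2)) * b ^ 2 = (a * (v + w)) ^ 2 := by
      have hb' : b ^ 2 = -(a ^ 2 - 3) := by rw [hb]; ring
      rw [hb', h3, hσ]; linear_combination (v + w) ^ 2 * ha
    rw [div_pow, ← h1]; field_simp; ring

lemma exists_descent (hv : u ^ 2 - v ^ 2 = 3) (hw : u ^ 2 - w ^ 2 = ω + 2) :
    ∃ a b c, a * b * c ≠ 0 ∧
      ((a ^ 2 - b ^ 2 = 3 ∧ a ^ 2 - c ^ 2 = ω + 2) ∨ (a ^ 2 + b ^ 2 = 3 ∧ a ^ 2 + c ^ 2 = ω + 2)) ∧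
      (u * (2 * (a * b * c)) = a ^ 4 - 3 * (ω + 2) ∨
        u * (2 * (a * b * c)) = -(a ^ 4 - 3 * (ω + 2))) := by
  have hA' : (u + v) * (u - v) = 3 := by linear_combination hv
  have hB' : (u + w) * (u - w) = ω + 2 := by linear_combination hw
  have hσ : (ω + 2 : GoldenField) ≠ 0 := fun h0 => by
    have := congrArg QuadraticAlgebra.im h0
    simp at this
  have hA : u + v ≠ 0 := fun h => three_ne_zero (α := GoldenField) (by rw [← hA', h, zero_mul])
  have hB : u + w ≠ 0 := fun h => hσ (by rw [← hB', h, zero_mul])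
  have hC : v + w ≠ 0 := fun h => by
    have h0 : (ω - 1 : GoldenField) = 0 := by linear_combination (v - w) * h + hv - hw
    have := congrArg QuadraticAlgebra.im h0
    simp at this
  obtain ⟨d, n, hd, hn⟩ := exists_eq_mul_sq_of_curve (x := (u + v) * (u + w))
    (y := (u + v) * (u + w) * (v + w)) (mul_ne_zero (mul_ne_zero hA hB) hC)
    (by rw [← hA', ← hB']; ring)
  have hneg : ∀ {a v' w'}, v' ^ 2 = v ^ 2 → w' ^ 2 = w ^ 2 → (-u + v') * (-u + w') = a ^ 2 →
      ∃ a b c, a * b * c ≠ 0 ∧ ((a ^ 2 - b ^ 2 = 3 ∧ a ^ 2 - c ^ 2 = ω + 2) ∨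
        (a ^ 2 + b ^ 2 = 3 ∧ a ^ 2 + c ^ 2 = ω + 2)) ∧
        (u * (2 * (a * b * c)) = a ^ 4 - 3 * (ω + 2) ∨
          u * (2 * (a * b * c)) = -(a ^ 4 - 3 * (ω + 2))) := by
    intro a v' w' hv' hw' ha
    obtain ⟨b, c, h1, h2, h3⟩ := exists_descent_of_eq_sq (by rw [← hv, hv']; ring)
      (by rw [← hw, hw']; ring) ha
    exact ⟨a, b, c, h1, h2, .inr (by linear_combination -h3)⟩
  rcases hd with rfl | rfl | rfl | rfl
  · obtain ⟨b, c, h1, h2, h3⟩ := exists_descent_of_eq_sq hv hw (a := n) (by rw [hn, one_mul])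
    exact ⟨n, b, c, h1, h2, .inl h3⟩
  · refine hneg (v' := v) (w' := -w) (a := 3 * n / (u + v)) rfl (neg_sq w) ?_
    rw [div_pow, eq_div_iff (pow_ne_zero 2 hA)]
    linear_combination 3 * hn + (u + w) * (u + v) * hA'
  · refine hneg (v' := -v) (w' := w) (a := (ω + 2) * n / (u + w)) (neg_sq v) rfl ?_
    rw [div_pow, eq_div_iff (pow_ne_zero 2 hB)]
    linear_combination (ω + 2) * hn + (u + w) * (u + v) * hB'
  · have hn0 : n ≠ 0 := by rintro rfl; exact mul_ne_zero hA hB (by rw [hn]; ring)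
    obtain ⟨b, c, h1, h2, h3⟩ := exists_descent_of_eq_sq (u := u) (v := -v) (w := -w) (a := n⁻¹)
      (by rw [← hv]; ring) (by rw [← hw]; ring) (by
        rw [inv_pow]
        apply eq_inv_of_mul_eq_one_left
        apply mul_left_cancel₀ (mul_ne_zero three_ne_zero hσ)
        linear_combination (u + -v) * (u + -w) * -hn + (u + w) * (u - w) * hA' + 3 * hB')
    exact ⟨_, b, c, h1, h2, .inl h3⟩

end Descent

@[simp] lemma two_eq_zero_goldenMod_one : (2 : GoldenMod 1) = 0 := by decide

lemma exists_eq_add_two_mul {x y : twoIntegers} (h : 2 * reduce 2 x = 2 * reduce 2 y) :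
    ∃ r, x = y + 2 * r := by
  obtain ⟨r, hr⟩ := exists_of_reduce_eq (k := 2) (x := 2 * x) (y := 2 * y) (by simpa using h)
  refine ⟨r, Subtype.ext ?_⟩
  apply mul_left_cancel₀ (two_ne_zero (α := GoldenField))
  have := congrArg Subtype.val hr
  push_cast at this ⊢
  linear_combination this

lemma reduce_one_eq {x y : twoIntegers} (h : 2 * reduce 2 x = 2 * reduce 2 y) :
    reduce 1 x = reduce 1 y := by
  obtain ⟨r, rfl⟩ := exists_eq_add_two_mul h
  simp

lemma HasLead.of_mul_eq {x y z : GoldenField} {k l : ℤ} {c d : GoldenMod 1}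
    (hy : HasLead y k c) (hz : HasLead z l d) (h : x * y = z ∨ x * y = -z) :
    HasLead x (l - k) (d * c ^ 2) := by
  have hy0 := hy.ne_zero
  rcases h with h | h
  · have := hz.mul hy.inv
    rwa [← h, mul_inv_cancel_right₀ hy0] at this
  · have := hz.neg.mul hy.inv
    rwa [← h, mul_inv_cancel_right₀ hy0] at this

lemma HasLead.exists_eq_div {x : GoldenField} {k : ℤ} {c : GoldenMod 1} (h : HasLead x k c)
    (hx : x ∉ twoIntegers) :
    ∃ (n : ℕ) (e : twoIntegers), k = -(n + 1 : ℕ) ∧ x * 2 ^ (n + 1) = e ∧ reduce 1 e = c := by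
  have hk : k < 0 := by by_contra! hk; exact hx (h.mem hk)
  obtain ⟨hc, e, rfl, rfl⟩ := h
  refine ⟨(-k - 1).toNat, e, by omega, ?_, rfl⟩
  have h1 : ((-k - 1).toNat + 1 : ℤ) = -k := by omega
  rw [← zpow_natCast]
  push_cast
  rw [h1, mul_right_comm, ← zpow_add₀ two_ne_zero]
  simp

section Local

variable {u v w a b c : GoldenField}

lemma exists_of_mem (hu : u ∈ twoIntegers) (hv : u ^ 2 - v ^ 2 = 3)
    (hw : u ^ 2 - w ^ 2 = ω + 2) :
    ∃ s r t : twoIntegers, reduce 1 s = 1 ∧ u = 2 * s ∧ v = 1 + 2 * r ∧ w = (ω : GoldenField) + 1 + 2 * t := by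
  obtain ⟨u, rfl⟩ : ∃ x : twoIntegers, (x : GoldenField) = u := ⟨⟨u, hu⟩, rfl⟩
  obtain ⟨v, rfl⟩ : ∃ x : twoIntegers, (x : GoldenField) = v := by
    refine ⟨⟨v, mem_of_sq_mem ?_⟩, rfl⟩
    rw [show v ^ 2 = u ^ 2 - 3 by linear_combination -hv]
    exact (u ^ 2 - 3 : twoIntegers).2
  obtain ⟨w, rfl⟩ : ∃ x : twoIntegers, (x : GoldenField) = w := by
    refine ⟨⟨w, mem_of_sq_mem ?_⟩, rfl⟩
    rw [show w ^ 2 = u ^ 2 - ((ω : GoldenField) + 2) by linear_combination -hw]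
    exact (u ^ 2 - (twoOmega + 2) : twoIntegers).2
  have hv' : u ^ 2 - v ^ 2 = 3 := Subtype.ext hv
  have hw' : u ^ 2 - w ^ 2 = twoOmega + 2 := Subtype.ext hw
  have h1 := congrArg (reduce 2) hv'
  have h2 := congrArg (reduce 2) hw'
  simp only [map_sub, map_add, map_pow, map_ofNat, reduce_twoOmega] at h1 h2
  have huv : ∀ x y : GoldenMod 2, x ^ 2 - y ^ 2 = 3 → 2 * x = 0 ∧ 2 * y = 2 := by decide
  have huw : ∀ x y : GoldenMod 2, x ^ 2 - y ^ 2 = ω + 2 → 2 * x = 0 → 2 * y = 2 * (ω + 1) := by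
    decide
  obtain ⟨s, rfl⟩ := exists_eq_add_two_mul (x := u) (y := 0) (by simpa using (huv _ _ h1).1)
  obtain ⟨r, rfl⟩ := exists_eq_add_two_mul (x := v) (y := 1) (by simpa using (huv _ _ h1).2)
  obtain ⟨t, rfl⟩ := exists_eq_add_two_mul (x := w) (y := twoOmega + 1)
    (by simpa using huw _ _ h2 (huv _ _ h1).1)
  refine ⟨s, r, t, ?_, by push_cast; ring, by push_cast; ring, by push_cast; simp⟩
  have h4 : (4 : GoldenField) ≠ 0 := by norm_num
  have hsr : s ^ 2 = 1 + r + r ^ 2 := Subtype.ext (mul_left_cancel₀ h4 (by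
    push_cast at hv ⊢; linear_combination hv))
  have hst : s ^ 2 = twoOmega + 1 + (twoOmega + 1) * t + t ^ 2 :=
    Subtype.ext (mul_left_cancel₀ h4 (by
      push_cast [coe_twoOmega] at hw ⊢; linear_combination hw + omega_sq))
  have h3 := congrArg (reduce 1) hsr
  have h4 := congrArg (reduce 1) hst
  simp only [map_mul, map_add, map_pow, map_one, reduce_twoOmega] at h3 h4
  have hx : ∀ x y z : GoldenMod 1, x ^ 2 = 1 + y + y ^ 2 →
    x ^ 2 = ω + 1 + (ω + 1) * z + z ^ 2 → x = 1 := by decide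
  exact hx _ _ _ h3 h4

lemma hasLead_of_mem (hu : u ∈ twoIntegers) (hv : u ^ 2 - v ^ 2 = 3)
    (hw : u ^ 2 - w ^ 2 = ω + 2) : HasLead u 1 1 := by
  obtain ⟨s, r, t, hs, rfl, -, -⟩ := exists_of_mem hu hv hw
  exact ⟨by decide, s, by simp, hs⟩

lemma hasLead_of_descent_mem (ha : a ∈ twoIntegers) (hb : a ^ 2 - b ^ 2 = 3)
    (hc : a ^ 2 - c ^ 2 = ω + 2) (hu : u * (2 * (a * b * c)) = a ^ 4 - 3 * (ω + 2) ∨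
      u * (2 * (a * b * c)) = -(a ^ 4 - 3 * (ω + 2))) : HasLead u (-2) (ω + 1) := by
  obtain ⟨s, r, t, hs, rfl, rfl, rfl⟩ := exists_of_mem ha hb hc
  have hs' : HasLead s 0 1 := hs ▸ hasLead_coe (x := s) (by rw [hs]; decide)
  have hr : HasLead (1 + 2 * r) 0 1 := ⟨by decide, 1 + 2 * r, by push_cast; simp, by simp⟩
  have ht : HasLead ((ω : GoldenField) + 1 + 2 * t) 0 (ω + 1) :=
    ⟨by decide, twoOmega + 1 + 2 * t, by push_cast; simp, by simp⟩
  have hnum : HasLead ((2 * s) ^ 4 - 3 * ((ω : GoldenField) + 2)) 0 ω := by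
    refine ⟨by decide, 16 * s ^ 4 - 3 * (twoOmega + 2), by push_cast; simp; ring, ?_⟩
    simp only [map_sub, map_mul, map_pow, map_add, map_ofNat, reduce_twoOmega, hs]
    decide
  have := (hasLead_two.mul (((hasLead_two.mul hs').mul hr).mul ht)).of_mul_eq hnum hu
  convert this using 1 <;> decide

lemma hasLead_of_descent_not_mem {k : ℤ} {d : GoldenMod 1} (hlead : HasLead a k d)
    (ha : a ∉ twoIntegers) (hb : a ^ 2 - b ^ 2 = 3)
    (hc : a ^ 2 - c ^ 2 = ω + 2) (hu : u * (2 * (a * b * c)) = a ^ 4 - 3 * (ω + 2) ∨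
      u * (2 * (a * b * c)) = -(a ^ 4 - 3 * (ω + 2))) : HasLead u (k - 1) d := by
  have hd := hlead.1
  obtain ⟨n, e, rfl, he, hed⟩ := hlead.exists_eq_div ha
  have hsub : ∀ {b : GoldenField} {r : twoIntegers}, a ^ 2 - b ^ 2 = r →
      HasLead b (-(n + 1 : ℕ)) d := by
    intro b r hb
    have h1 : (b * 2 ^ (n + 1)) ^ 2 = (e ^ 2 - (2 ^ (n + 1)) ^ 2 * r : twoIntegers) := by
      push_cast; rw [← he, ← hb]; ring
    have hf : b * 2 ^ (n + 1) ∈ twoIntegers := mem_of_sq_mem (by rw [h1]; exact Subtype.prop _)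
    have h2 : (⟨_, hf⟩ : twoIntegers) ^ 2 = e ^ 2 - (2 ^ (n + 1)) ^ 2 * r := Subtype.ext h1
    have h3 := congrArg (reduce 1) h2
    simp only [map_sub, map_mul, map_pow, reduce_ofNat, two_eq_zero_goldenMod_one, hed,
      zero_pow (Nat.succ_ne_zero _), zero_mul, sub_zero] at h3
    refine ⟨hd, ⟨_, hf⟩, ?_, ?_⟩
    · rw [zpow_neg, zpow_natCast]; field_simp
    · have h4 : ∀ x y : GoldenMod 1, x ^ 2 = y ^ 2 → x = y := by decide
      exact h4 _ _ h3
  have hb' := hsub (r := 3) hb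
  have hc' := hsub (r := twoOmega + 2) hc
  have hnum : HasLead (a ^ 4 - 3 * (ω + 2)) (4 * (-(n + 1 : ℕ))) d := by
    refine ⟨hd, e ^ 4 - (2 ^ (n + 1)) ^ 4 * (3 * (twoOmega + 2)), ?_, ?_⟩
    · push_cast
      rw [← he, mul_comm 4, zpow_mul, zpow_neg]
      norm_cast
      push_cast
      field_simp
      simp
    · have h4 : ∀ x : GoldenMod 1, x ^ 4 = x := by decide
      simp [hed, h4]
  have := (hasLead_two.mul ((hlead.mul hb').mul hc')).of_mul_eq hnum hu
  convert this using 1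
  · push_cast; ring
  · have h4 : ∀ x : GoldenMod 1, x ≠ 0 → x = x * (1 * (x * x * x)) ^ 2 := by decide
    exact h4 d hd

lemma hasLead_of_descent_neg (hb : a ^ 2 + b ^ 2 = 3) (hc : a ^ 2 + c ^ 2 = ω + 2)
    (hu : u * (2 * (a * b * c)) = a ^ 4 - 3 * (ω + 2) ∨
      u * (2 * (a * b * c)) = -(a ^ 4 - 3 * (ω + 2))) : HasLead u 1 1 := by
  have ha : a ∈ twoIntegers := by
    by_contra ha
    have ha0 : a ≠ 0 := by rintro rfl; exact ha (zero_mem _)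
    obtain ⟨k, d, hlead⟩ := exists_hasLead ha0
    obtain ⟨n, e, rfl, he, rfl⟩ := hlead.exists_eq_div ha
    have h1 : (b * 2 ^ (n + 1)) ^ 2 = (4 * (3 * (2 ^ n) ^ 2) - e ^ 2 : twoIntegers) := by
      push_cast; rw [← he]; linear_combination (2 ^ (n + 1)) ^ 2 * hb
    have hf : b * 2 ^ (n + 1) ∈ twoIntegers := mem_of_sq_mem (by rw [h1]; exact Subtype.prop _)
    have h2 : (⟨_, hf⟩ : twoIntegers) ^ 2 = 4 * (3 * (2 ^ n) ^ 2) - e ^ 2 := Subtype.ext h1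
    have h3 := congrArg (reduce 2) h2
    simp only [map_sub, map_mul, map_pow, map_ofNat] at h3
    rw [show (4 : GoldenMod 2) = 0 by decide, zero_mul, zero_sub] at h3
    have h4 : ∀ x y : GoldenMod 2, x ^ 2 = -y ^ 2 → 2 * y = 0 := by decide
    exact hlead.1 (by simpa using reduce_one_eq (x := e) (y := 0) (by simpa using h4 _ _ h3))
  obtain ⟨a, rfl⟩ : ∃ x : twoIntegers, (x : GoldenField) = a := ⟨⟨a, ha⟩, rfl⟩
  obtain ⟨b, rfl⟩ : ∃ x : twoIntegers, (x : GoldenField) = b := by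
    refine ⟨⟨b, mem_of_sq_mem ?_⟩, rfl⟩
    rw [show b ^ 2 = 3 - a ^ 2 by linear_combination hb]
    exact (3 - a ^ 2 : twoIntegers).2
  obtain ⟨c, rfl⟩ : ∃ x : twoIntegers, (x : GoldenField) = c := by
    refine ⟨⟨c, mem_of_sq_mem ?_⟩, rfl⟩
    rw [show c ^ 2 = (ω : GoldenField) + 2 - a ^ 2 by linear_combination hc]
    exact (twoOmega + 2 - a ^ 2 : twoIntegers).2
  have hb' : a ^ 2 + b ^ 2 = 3 := Subtype.ext hb
  have hc' : a ^ 2 + c ^ 2 = twoOmega + 2 := Subtype.ext hc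
  have h1 := congrArg (reduce 2) hb'
  have h2 := congrArg (reduce 2) hc'
  simp only [map_add, map_pow, map_ofNat, reduce_twoOmega] at h1 h2
  have hab : ∀ x y : GoldenMod 2, x ^ 2 + y ^ 2 = 3 → 2 * x ≠ 2 ∧ 2 * y = 2 * (x + 1) := by decide
  have hac : ∀ x y : GoldenMod 2, x ^ 2 + y ^ 2 = ω + 2 → 2 * x ≠ 2 → 2 * x = 2 * ω ∧ 2 * y = 2 := by
    decide
  obtain ⟨h3, h4⟩ := hac _ _ h2 (hab _ _ h1).1
  have ha1 : reduce 1 a = ω := by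
    simpa using reduce_one_eq (x := a) (y := twoOmega) (by simpa using h3)
  have hb1 : reduce 1 b = ω + 1 := by
    rw [reduce_one_eq (x := b) (y := a + 1) (by simpa using (hab _ _ h1).2), map_add, ha1, map_one]
  have hc1 : reduce 1 c = 1 := by
    simpa using reduce_one_eq (x := c) (y := 1) (by simpa using h4)
  have hden : HasLead (a * b * c) 0 1 :=
    ⟨by decide, a * b * c, by push_cast; simp, by simp [ha1, hb1, hc1]; decide⟩
  have hnum : HasLead (a ^ 4 - 3 * ((ω : GoldenField) + 2)) 2 1 := by
    obtain ⟨r, rfl⟩ := exists_eq_add_two_mul (x := a) (y := twoOmega) (by simpa using h3)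
    let s := twoOmega * r + r ^ 2
    refine ⟨by decide, -1 + 2 * ((twoOmega + 1) * s + 2 * s ^ 2), ?_, ?_⟩
    · simp only [s]; push_cast [coe_twoOmega]
      linear_combination ((ω : GoldenField) ^ 2 + ω + 2 + 8 * ω * r + 8 * r ^ 2) * omega_sq
    · simp; decide
  simpa using (hasLead_two.mul hden).of_mul_eq hnum hu

end Local

/-- The `2`-adic shape of points on `u² - v² = 3`, `u² - w² = β + 2` over `ℚ(√5)`. -/
theorem hasLead_of_point {u v w : GoldenField} (hv : u ^ 2 - v ^ 2 = 3)
    (hw : u ^ 2 - w ^ 2 = ω + 2) : HasLead u 1 1 ∨ ∃ k, HasLead u k (ω + 1) := by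
  by_cases hu : u ∈ twoIntegers
  · exact .inl (hasLead_of_mem hu hv hw)
  right
  have hu0 : u ≠ 0 := by rintro rfl; exact hu (zero_mem _)
  obtain ⟨k, d, hlead⟩ := exists_hasLead hu0
  obtain ⟨n, -, hk, -⟩ := hlead.exists_eq_div hu
  refine ⟨k, ?_⟩
  induction n using Nat.strong_induction_on generalizing u v w k d with
  | _ n ih =>
  obtain ⟨a, b, c, habc, h | h, h'⟩ := exists_descent hv hw
  · by_cases ha : a ∈ twoIntegers
    · have h1 := hasLead_of_descent_mem ha h.1 h.2 h'
      rwa [(hlead.unique h1).1]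
    · have ha0 : a ≠ 0 := by rintro rfl; exact ha (zero_mem _)
      obtain ⟨l, d', hl⟩ := exists_hasLead ha0
      obtain ⟨m, -, hm, -⟩ := hl.exists_eq_div ha
      have h1 := hasLead_of_descent_not_mem hl ha h.1 h.2 h'
      have h2 := (hlead.unique h1).1
      have h3 := ih m (by omega) h.1 h.2 ha ha0 l d' hl hm
      rw [h2]
      exact hasLead_of_descent_not_mem h3 ha h.1 h.2 h'
  · exact (hu ((hasLead_of_descent_neg h.1 h.2 h').mem zero_le_one)).elim

section Quartic

variable {M N y n : GoldenField}

lemma mem_of_quartic (hM : M.im = 0) (h : y ^ 2 = -M ^ 4 + (18 - 8 * ω) * M ^ 2 + (8 * ω - 13)) :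
    M ∈ twoIntegers := by
  by_contra hmem
  have hM0 : M ≠ 0 := by rintro rfl; exact hmem (zero_mem _)
  obtain ⟨k, c, hlead⟩ := exists_hasLead hM0
  obtain rfl := hlead.eq_one_of_im_eq_zero hM
  obtain ⟨n, e, -, he, he1⟩ := hlead.exists_eq_div hmem
  have h1 : (y * (2 ^ (n + 1)) ^ 2) ^ 2 =
      (4 * ((18 - 8 * twoOmega) * e ^ 2 * (2 ^ n) ^ 2 + 4 * (8 * twoOmega - 13) * (2 ^ n) ^ 4)
        - e ^ 4 : twoIntegers) := by
    push_cast [coe_twoOmega]; rw [← he]; linear_combination ((2 : GoldenField) ^ (n + 1)) ^ 4 * h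
  have hf : y * (2 ^ (n + 1)) ^ 2 ∈ twoIntegers := mem_of_sq_mem (by rw [h1]; exact Subtype.prop _)
  have h2 : (⟨_, hf⟩ : twoIntegers) ^ 2 = 4 * ((18 - 8 * twoOmega) * e ^ 2 * (2 ^ n) ^ 2 +
      4 * (8 * twoOmega - 13) * (2 ^ n) ^ 4) - e ^ 4 := Subtype.ext h1
  obtain ⟨r, rfl⟩ : ∃ r, e = 1 + 2 * r := by
    obtain ⟨r, hr⟩ := exists_of_reduce_eq (k := 1) (x := e) (y := 1) (by simpa using he1)
    exact ⟨r, by simpa using hr⟩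
  have h3 := congrArg (reduce 2) h2
  simp only [map_sub, map_mul, map_add, map_pow, map_ofNat, map_one] at h3
  rw [show (4 : GoldenMod 2) = 0 by decide, zero_mul, zero_sub] at h3
  have h4 : ∀ x z : GoldenMod 2, x ^ 2 ≠ -(1 + 2 * z) ^ 4 := by decide
  exact h4 _ _ h3

lemma exists_sq_eq_of_quartic (hM : M.im = 0)
    (h : y ^ 2 = -M ^ 4 + (18 - 8 * ω) * M ^ 2 + (8 * ω - 13)) :
    ∃ k : twoIntegers, (reduce 1 k = 0 ∨ reduce 1 k = 1) ∧ M ^ 2 = 1 + 8 * k := by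
  obtain ⟨M, rfl⟩ : ∃ x : twoIntegers, (x : GoldenField) = M := ⟨⟨M, mem_of_quartic hM h⟩, rfl⟩
  have h1 : y ^ 2 = (-M ^ 4 + (18 - 8 * twoOmega) * M ^ 2 + (8 * twoOmega - 13) : twoIntegers) := by
    push_cast [coe_twoOmega]; exact h
  obtain ⟨y, rfl⟩ : ∃ x : twoIntegers, (x : GoldenField) = y :=
    ⟨⟨y, mem_of_sq_mem (by rw [h1]; exact Subtype.prop _)⟩, rfl⟩
  have h2 : y ^ 2 = -M ^ 4 + (18 - 8 * twoOmega) * M ^ 2 + (8 * twoOmega - 13) := Subtype.ext h1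
  have h3 := congrArg (reduce 2) h2
  simp only [map_sub, map_mul, map_add, map_neg, map_pow, map_ofNat, reduce_twoOmega] at h3
  have hM1 : reduce 1 M = 1 := by
    refine (reduce_one_of_im_eq_zero hM).resolve_left fun h0 ↦ ?_
    obtain ⟨r, rfl⟩ := exists_of_reduce_eq_zero h0
    simp only [map_mul, map_pow, map_ofNat] at h3
    have h4 : ∀ x z : GoldenMod 2, x ^ 2 ≠ -(2 ^ 1 * z) ^ 4 + (18 - 8 * ω) * (2 ^ 1 * z) ^ 2 +
      (8 * ω - 13) := by decide
    exact h4 _ _ h3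
  obtain ⟨p, rfl⟩ : ∃ r, M = 1 + 2 * r := by
    obtain ⟨r, hr⟩ := exists_of_reduce_eq (k := 1) (x := M) (y := 1) (by simpa using hM1)
    exact ⟨r, by simpa using hr⟩
  have hp : (p : GoldenField).im = 0 := by
    have h2 : (2 : GoldenField) = ⟨2, 0⟩ := rfl
    push_cast at hM
    simpa [h2] using hM
  have hpp : reduce 1 (p ^ 2 + p) = 0 := by
    rcases reduce_one_of_im_eq_zero hp with h | h <;> (simp [h]; try decide)
  obtain ⟨k, hk⟩ := exists_of_reduce_eq_zero hpp
  have hk' : (p : GoldenField) ^ 2 + p = 2 * k := by simpa using congrArg Subtype.val hk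
  refine ⟨k, reduce_one_of_im_eq_zero ?_, ?_⟩
  · have h2 : (2 : GoldenField) = ⟨2, 0⟩ := rfl
    have := congrArg QuadraticAlgebra.im hk'
    simpa [h2, hp, pow_two] using this.symm
  · push_cast; linear_combination 4 * hk'

/-- A rational point of the quartic yields a root `N` of an auxiliary quadratic with known
`2`-adic expansion. -/
lemma exists_root_of_quartic (hM : M.im = 0)
    (hy' : y ^ 2 = -M ^ 4 + (18 - 8 * ω) * M ^ 2 + (8 * ω - 13)) :
    ∃ (N : GoldenField) (k q : twoIntegers), (reduce 1 k = 0 ∨ reduce 1 k = 1) ∧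
      N = 4 * ((ω : GoldenField) ^ 2 + 4 * (ω : GoldenField) ^ 2 * k ^ 2 + 8 * q) ∧
      N ^ 2 = 4 * (M ^ 2 + ω) * N - 3 * (ω + 2) * (M ^ 2 - 1) ^ 2 := by
  obtain ⟨k, hk, hMk⟩ := exists_sq_eq_of_quartic hM hy'
  have h4 : (4 : GoldenField) ≠ 0 := by norm_num
  have h2 : (2 : GoldenField) ≠ 0 := by norm_num
  have hy : y ^ 2 = 4 * (1 + 16 * ((2 - (ω : GoldenField)) * k - k ^ 2)) := by
    linear_combination hy' + (-M ^ 2 - (1 + 8 * k) + (18 - 8 * (ω : GoldenField))) * hMk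
  let t := (2 - twoOmega) * k - k ^ 2
  obtain ⟨f, rfl⟩ : ∃ f : twoIntegers, y = 2 * f := by
    have h1 : (y / 2) ^ 2 = (1 + 16 * t : twoIntegers) := by
      simp only [t]; push_cast [coe_twoOmega]; rw [div_pow, hy]; ring
    exact ⟨⟨y / 2, mem_of_sq_mem (by rw [h1]; exact Subtype.prop _)⟩, by field_simp⟩
  have hf : f ^ 2 = 1 + 16 * t := Subtype.ext (mul_left_cancel₀ h4 (by
    simp only [t]; push_cast [coe_twoOmega]; linear_combination hy))
  obtain ⟨f', hf', hff⟩ : ∃ f' : twoIntegers, 2 * reduce 2 f' = 2 ∧ f' ^ 2 = f ^ 2 := ⟨f, by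
    have h3 := congrArg (reduce 2) hf
    simp only [map_add, map_mul, map_pow, map_ofNat, map_one] at h3
    have h5 : ∀ x z : GoldenMod 2, x ^ 2 = 1 + 16 * z → 2 * x = 2 := by decide
    exact h5 _ _ h3, rfl⟩
  obtain ⟨g, rfl⟩ := exists_eq_add_two_mul (x := f') (y := 1) (by simpa using hf')
  obtain ⟨h, hh⟩ : ∃ h : twoIntegers, (1 + 4 * h) ^ 2 = f ^ 2 := by
    have hg : g ^ 2 + g = 4 * t := Subtype.ext (mul_left_cancel₀ h4 (by
      have := congrArg Subtype.val (hff.trans hf)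
      push_cast at this ⊢; linear_combination this))
    have h3 := congrArg (reduce 1) hg
    have h5 : ∀ x z : GoldenMod 1, x ^ 2 + x = 4 * z → x = 0 ∨ x = 1 := by decide
    simp only [map_add, map_mul, map_pow, map_ofNat] at h3
    rcases h5 _ _ h3 with h0 | h0
    · obtain ⟨h, rfl⟩ := exists_of_reduce_eq_zero h0
      exact ⟨h, by rw [← hff]; ring⟩
    · obtain ⟨h, rfl⟩ := exists_of_reduce_eq (k := 1) (x := g) (y := 1) (by simpa using h0)
      exact ⟨-1 - h, by rw [← hff]; ring⟩
  obtain ⟨h, rfl⟩ : ∃ r, h = 2 * r := by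
    have h3 : h = 2 * (t - h ^ 2) := Subtype.ext (mul_left_cancel₀ h4 (mul_left_cancel₀ h2 (by
      have := congrArg Subtype.val (hh.trans hf)
      push_cast at this ⊢; linear_combination this)))
    exact ⟨_, h3⟩
  have hh' := congrArg Subtype.val hh
  have hht := congrArg Subtype.val (hh.trans hf)
  simp only [t] at hht
  push_cast [coe_twoOmega] at hht hh'
  refine ⟨2 * (M ^ 2 + ω) + (ω : GoldenField) ^ 2 * (2 * (1 + 8 * (h : GoldenField))), k,
    k - twoOmega ^ 2 * k ^ 2 - 2 * twoOmega ^ 2 * h ^ 2, hk, ?_, ?_⟩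
  · push_cast [coe_twoOmega]
    linear_combination 2 * hMk + (ω : GoldenField) ^ 2 * hht
      + (16 * k * (1 - (ω : GoldenField)) - 2) * omega_sq
  · linear_combination (ω : GoldenField) ^ 4 * hy' + 4 * (ω : GoldenField) ^ 4 * hh'
      + (-(ω ^ 2 + ω + 2) * M ^ 4 + (-8 * ω ^ 3 + 10 * ω ^ 2 + 2 * ω + 12) * M ^ 2
        + (8 * ω ^ 3 - 5 * ω ^ 2 + 3 * ω - 6)) * omega_sq

lemma hasLead_root {k q : twoIntegers}
    (hN : N = 4 * ((ω : GoldenField) ^ 2 + 4 * (ω : GoldenField) ^ 2 * k ^ 2 + 8 * q)) :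
    HasLead N 2 (ω + 1) := by
  refine ⟨by decide, twoOmega ^ 2 + 4 * twoOmega ^ 2 * k ^ 2 + 8 * q, ?_, ?_⟩
  · rw [hN]; push_cast [coe_twoOmega]; norm_num
  · simp only [map_add, map_mul, map_pow, map_ofNat, reduce_twoOmega]
    rw [show (4 : GoldenMod 1) = 0 by decide, show (8 : GoldenMod 1) = 0 by decide]
    simp only [zero_mul, add_zero]
    decide

/-- The `2`-adic expansion of `N` forces its square class among the four candidates. -/
lemma eq_sq_of_root {k q : twoIntegers} {d : GoldenField} (hk : reduce 1 k = 0 ∨ reduce 1 k = 1)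
    (hN : N = 4 * ((ω : GoldenField) ^ 2 + 4 * (ω : GoldenField) ^ 2 * k ^ 2 + 8 * q))
    (hd : d = 1 ∨ d = 3 ∨ d = ω + 2 ∨ d = 3 * (ω + 2)) (h : N = d * n ^ 2) :
    N = n ^ 2 ∧ HasLead n 1 ω := by
  let P := twoOmega ^ 2 + 4 * twoOmega ^ 2 * k ^ 2 + 8 * q
  obtain ⟨D, rfl, hD⟩ : ∃ D : twoIntegers, (D : GoldenField) = d ∧
      (D = 1 ∨ D = 3 ∨ D = twoOmega + 2 ∨ D = 3 * (twoOmega + 2)) := by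
    rcases hd with rfl | rfl | rfl | rfl
    · exact ⟨1, rfl, by simp⟩
    · exact ⟨3, rfl, by simp⟩
    · exact ⟨twoOmega + 2, by push_cast; simp, by simp⟩
    · exact ⟨3 * (twoOmega + 2), by push_cast; simp, by simp⟩
  have h1 : (D * n / 2) ^ 2 = (D * P : twoIntegers) := by
    simp only [P]; push_cast [coe_twoOmega]
    linear_combination (-D / 4 : GoldenField) * h + (D / 4 : GoldenField) * hN
  have hf : D * n / 2 ∈ twoIntegers := mem_of_sq_mem (by rw [h1]; exact Subtype.prop _)
  have h2 : (⟨_, hf⟩ : twoIntegers) ^ 2 = D * P := Subtype.ext h1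
  have hP : reduce 3 P = ω ^ 2 ∨ reduce 3 P = ω ^ 2 + 4 * ω ^ 2 := by
    have h3 : ∀ x : GoldenMod 3, ω ^ 2 + 4 * ω ^ 2 * (2 ^ 1 * x) ^ 2 = ω ^ 2 := by decide
    have h4 : ∀ x : GoldenMod 3,
      ω ^ 2 + 4 * ω ^ 2 * (1 + 2 ^ 1 * x) ^ 2 = ω ^ 2 + 4 * ω ^ 2 := by decide
    simp only [P, map_add, map_mul, map_pow, map_ofNat, reduce_twoOmega,
      show (8 : GoldenMod 3) = 0 by decide, zero_mul, add_zero]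
    rcases hk with h0 | h0
    · obtain ⟨r, rfl⟩ := exists_of_reduce_eq_zero h0
      left; simp only [map_mul, map_pow, map_ofNat]; exact h3 _
    · obtain ⟨r, rfl⟩ := exists_of_reduce_eq (k := 1) (x := k) (y := 1) (by simpa using h0)
      right; simp only [map_add, map_one, map_mul, map_pow, map_ofNat]; exact h4 _
  have h3 := congrArg (reduce 3) h2
  rcases hD with rfl | rfl | rfl | rfl
  · refine ⟨by simpa using h, by decide, ⟨_, hf⟩, by simp; field_simp, ?_⟩
    have h4 := congrArg (reduce 1) h2
    simp only [P, map_add, map_mul, map_pow, map_ofNat, reduce_twoOmega, one_mul,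
      show (4 : GoldenMod 1) = 0 by decide, show (8 : GoldenMod 1) = 0 by decide, zero_mul,
      add_zero] at h4
    have h5 : ∀ x : GoldenMod 1, x ^ 2 = ω ^ 2 → x = ω := by decide
    exact h5 _ h4
  all_goals
    exfalso
    revert h3
    simp only [map_add, map_mul, map_pow, map_ofNat, reduce_twoOmega]
    generalize (reduce 3) _ = x
    rcases hP with hP | hP <;> rw [hP] <;> revert x <;> decide

/-- `N / (M - 1) ^ 2` is the first coordinate of a point of `y² = x(x - 3)(x - β - 2)`. -/
lemma exists_cubic (hQ : N ^ 2 = 4 * (M ^ 2 + ω) * N - 3 * (ω + 2) * (M ^ 2 - 1) ^ 2) :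
    ∃ Y, Y ^ 2 = N * (N - 3 * (M - 1) ^ 2) * (N - (ω + 2) * (M - 1) ^ 2) := by
  refine ⟨(2 * ω + (2 * ω - 2) * (M - 1)) * (N - (9 - 3 * ω) * (M - 1) ^ 2)
      - (21 - 12 * ω) * (M - 1) ^ 3, ?_⟩
  linear_combination (-N + (2 * ω + (2 * ω - 2) * (M - 1)) ^ 2 + (ω + 5) * (M - 1) ^ 2
      - 4 * (M ^ 2 + ω)) * hQ
    + (((24 * ω - 32) * M ^ 4 + (96 - 48 * ω) * M ^ 3 + (40 * ω - 60) * M ^ 2 + 24 * M - 12) * N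
      + (36 * ω ^ 2 - 120 * ω + 21) * M ^ 6 + (-144 * ω ^ 2 + 360 * ω - 54) * M ^ 5
      + (216 * ω ^ 2 - 336 * ω - 141) * M ^ 4 + (396 - 144 * ω ^ 2) * M ^ 3
      + (36 * ω ^ 2 + 168 * ω - 213) * M ^ 2 - (72 * ω + 54) * M + 45) * omega_sq

lemma product_identity (hQ : N ^ 2 = 4 * (M ^ 2 + ω) * N - 3 * (ω + 2) * (M ^ 2 - 1) ^ 2) :
    (N - 3 * (M - 1) ^ 2) * (N - 3 * (M + 1) ^ 2) =
      -((3 * ω - 3) * (M ^ 2 - 1) + (2 - ω) * N) ^ 2 := by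
  linear_combination (6 - 3 * ω) * hQ
    + (N ^ 2 - 6 * N * (M ^ 2 + 1) + 18 * (M ^ 2 - 1) ^ 2) * omega_sq

lemma sub_mul_sq_ne_zero {d t : GoldenField} {c : GoldenMod 1} (hN : HasLead N 2 (ω + 1))
    (hd : HasLead d 0 c) (hc : c ≠ ω + 1) (ht : t ≠ 0) (him : t.im = 0) : N - d * t ^ 2 ≠ 0 := by
  obtain ⟨k, e, hk⟩ := exists_hasLead ht
  obtain rfl := hk.eq_one_of_im_eq_zero him
  intro h
  have h1 := hd.mul (hk.mul hk)
  rw [← pow_two, ← sub_eq_zero.1 h] at h1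
  exact hc (by simpa using (h1.unique hN).2)

lemma hasLead_three : HasLead 3 0 1 := ⟨by decide, 3, by simp, by simp; decide⟩

lemma hasLead_omega_add_two : HasLead (ω + 2) 0 ω := ⟨by decide, twoOmega + 2, by simp, by simp⟩

lemma hasLead_sq_of_hasLead (hn : HasLead n 1 ω) : HasLead (n ^ 2) 2 (ω + 1) := by
  rw [pow_two]
  convert hn.mul hn using 1 <;> decide

lemma false_of_sq_sub_three_eq {b : GoldenField} (hM : M.im = 0) (hM1 : M ≠ 1)
    (hn : HasLead n 1 ω)
    (hQ : (n ^ 2) ^ 2 = 4 * (M ^ 2 + ω) * n ^ 2 - 3 * (ω + 2) * (M ^ 2 - 1) ^ 2)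
    (hb : n ^ 2 - 3 * (M - 1) ^ 2 = b ^ 2) : False := by
  have ht : M - 1 ≠ 0 := sub_ne_zero.2 hM1
  have him : (M - 1).im = 0 := by simpa using hM
  have hn0 := hn.ne_zero
  have hb0 : b ≠ 0 := by
    rintro rfl
    exact sub_mul_sq_ne_zero (hasLead_sq_of_hasLead hn) hasLead_three (by decide) ht him
      (by simpa using hb)
  obtain ⟨Y, hY⟩ := exists_cubic hQ
  have hu : HasLead (n / (M - 1)) 1 1 ∨ ∃ k, HasLead (n / (M - 1)) k (ω + 1) := by
    refine hasLead_of_point (v := b / (M - 1)) (w := Y / (n * b * (M - 1))) ?_ ?_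
    · field_simp
      linear_combination hb
    · rw [div_pow, div_pow, hY, hb]
      field_simp
      ring
  have hM' : M - 1 = n * (n / (M - 1))⁻¹ := by field_simp
  obtain ⟨k, c, hk, hc⟩ : ∃ k c, HasLead (M - 1) k c ∧ c ≠ 1 := by
    rcases hu with hu | ⟨k, hu⟩
    · exact ⟨1 + -1, ω * 1 ^ 2, by rw [hM']; exact hn.mul hu.inv, by decide⟩
    · exact ⟨1 + -k, ω * (ω + 1) ^ 2, by rw [hM']; exact hn.mul hu.inv, by decide⟩
  exact hc (hk.eq_one_of_im_eq_zero him)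

/-- The quartic `y² = -M⁴ + (18 - 8β)M² + (8β - 13)` has no point over `ℚ(√5)` with `M` rational,
apart from `M = ±1`. -/
theorem quartic_no_point (hM : M.im = 0) (hM1 : M ≠ 1) (hM2 : M ≠ -1)
    (h : y ^ 2 = -M ^ 4 + (18 - 8 * ω) * M ^ 2 + (8 * ω - 13)) : False := by
  obtain ⟨N, k, q, hk, hN, hQ⟩ := exists_root_of_quartic hM h
  have hlead := hasLead_root hN
  have ht : M - 1 ≠ 0 := sub_ne_zero.2 hM1
  have him : (M - 1).im = 0 := by simpa using hM
  have h3 := sub_mul_sq_ne_zero hlead hasLead_three (by decide) ht him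
  have h4 := sub_mul_sq_ne_zero hlead hasLead_omega_add_two (by decide) ht him
  obtain ⟨Y, hY⟩ := exists_cubic hQ
  have hY0 : Y ≠ 0 := by
    rintro rfl
    exact mul_ne_zero (mul_ne_zero hlead.ne_zero h3) h4 (by simpa using hY.symm)
  obtain ⟨d, n, hd, hdn⟩ := exists_eq_mul_sq_of_curve (x := N / (M - 1) ^ 2) (y := Y / (M - 1) ^ 3)
    (div_ne_zero hY0 (pow_ne_zero _ ht)) (by rw [div_pow, hY]; field_simp)
  obtain ⟨hn, hn'⟩ := eq_sq_of_root (n := n * (M - 1)) hk hN hd (by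
    rw [div_eq_iff (pow_ne_zero _ ht)] at hdn
    rw [hdn]; ring)
  generalize n * (M - 1) = n at hn hn'
  subst hn
  have hn0 := hn'.ne_zero
  obtain ⟨b, hb | hb⟩ := exists_sq_sub_three_eq (a := n / (M - 1)) (c := Y / (n * (M - 1) ^ 2)) (by
    rw [div_pow _ _ 2, div_pow _ _ 2, hY]; field_simp)
  · refine false_of_sq_sub_three_eq (b := b * (M - 1)) hM hM1 hn' hQ ?_
    rw [mul_pow, ← hb]; field_simp
  · have hb' : n ^ 2 - 3 * (M - 1) ^ 2 = -(b * (M - 1)) ^ 2 := by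
      rw [mul_pow, ← neg_mul, ← hb]; field_simp
    have hb0 : b * (M - 1) ≠ 0 := by
      intro h0
      rw [h0] at hb'
      exact h3 (by simpa using hb')
    refine false_of_sq_sub_three_eq (M := -M) (n := n) (by simpa using hM)
      (fun h0 ↦ hM2 (by rw [← h0, neg_neg])) hn' (by linear_combination hQ)
      (b := ((3 * ω - 3) * (M ^ 2 - 1) + (2 - ω) * n ^ 2) / (b * (M - 1))) ?_
    have := product_identity hQ
    rw [hb'] at this
    rw [div_pow, eq_div_iff (pow_ne_zero _ hb0)]
    linear_combination -this

end Quartic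

end GoldenField

/-- Elements of `ℚ(θ) ⊆ ℝ`, for `θ` a root of `X² - X - 1`, come from `GoldenField`. -/
lemma exists_eq_of_mem_adjoin {θ : ℝ} (φ : GoldenField →+* ℝ) (hφ : φ ω = θ) {Y : ℝ}
    (hY : Y ∈ IntermediateField.adjoin ℚ ({θ} : Set ℝ)) : ∃ x, φ x = Y := by
  have h : IntermediateField.adjoin ℚ ({θ} : Set ℝ) ≤ φ.toRatAlgHom.fieldRange := by
    rw [IntermediateField.adjoin_simple_le_iff]
    exact ⟨ω, hφ⟩
  exact h hY

/-- Lemma 6 of the paper: with `β = (1+√5)/2` and `L = ℚ(β) ⊆ ℝ`, the only solutions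
of `X⁴ + (8β-12)X³ + (16β-30)X² + (8β-12)X + 1 = Y²` with `X ∈ ℚ` and `Y ∈ L` are
`(X,Y) = (0, ±1)`. -/
theorem chabauty_curve_C3 (β : ℝ) (hβ : β = (1 + Real.sqrt 5) / 2)
    (X : ℚ) (Y : ℝ) (hY : Y ∈ IntermediateField.adjoin ℚ ({β} : Set ℝ)) :
    (X : ℝ) ^ 4 + (8 * β - 12) * (X : ℝ) ^ 3 + (16 * β - 30) * (X : ℝ) ^ 2
        + (8 * β - 12) * (X : ℝ) + 1 = Y ^ 2 ↔
      (X = 0 ∧ (Y = 1 ∨ Y = -1)) := by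
  constructor
  swap
  · rintro ⟨rfl, rfl | rfl⟩ <;> norm_num
  intro h
  have hβ2 : β ^ 2 = β + 1 := by
    rw [hβ]; linear_combination Real.sq_sqrt (show (0 : ℝ) ≤ 5 by norm_num) / 4
  suffices hX : X = 0 by
    subst hX
    exact ⟨rfl, sq_eq_one_iff.1 (by simpa using h.symm)⟩
  by_contra hX
  have hX1 : X + 1 ≠ 0 := by
    intro h0
    obtain rfl : X = -1 := by linarith
    push_cast at h
    nlinarith [sq_nonneg Y]
  obtain ⟨φ, hφ, -⟩ := GoldenField.exists_ringHom_real hβ2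
  obtain ⟨y, rfl⟩ := exists_eq_of_mem_adjoin φ hφ hY
  have h8 : φ 8 = 8 := map_ofNat φ 8
  have h12 : φ 12 = 12 := map_ofNat φ 12
  have h16 : φ 16 = 16 := map_ofNat φ 16
  have h30 : φ 30 = 30 := map_ofNat φ 30
  have hxy : (X : GoldenField) ^ 4 + (8 * (ω : GoldenField) - 12) * X ^ 3
      + (16 * (ω : GoldenField) - 30) * X ^ 2 + (8 * (ω : GoldenField) - 12) * X + 1 = y ^ 2 := φ.injective (by simpa [hφ, h8, h12, h16, h30] using h)
  have hX1' : (X : GoldenField) + 1 ≠ 0 := by exact_mod_cast hX1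
  refine GoldenField.quartic_no_point (M := ((X - 1) / (X + 1) : ℚ))
    (y := 2 * y / (X + 1) ^ 2) ?_ ?_ ?_ ?_
  · simp
  · intro h0
    have h1 : (X - 1) / (X + 1) = 1 := by exact_mod_cast h0
    field_simp at h1
    linarith
  · intro h0
    have h1 : (X - 1) / (X + 1) = -1 := by exact_mod_cast h0
    field_simp at h1
    exact hX (by linarith)
  · push_cast
    field_simp
    linear_combination -4 * hxy
end

section
/- Let $n \ge 7$ be a prime. There is no primitive non-constant arithmetic progression of integers of the form $x_1^2, x_2^2, x_3^n, x_4^n, x_5^2, x_6^2$ (six terms, with exponent pattern $(2,2,n,n,2,2)$). -/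
lemma sq_emod_eight (x : ℤ) :
    (x % 2 = 1 ∧ x ^ 2 % 8 = 1) ∨ (x % 2 = 0 ∧ (x ^ 2 % 8 = 0 ∨ x ^ 2 % 8 = 4)) := by
  have h : x % 8 = 0 ∨ x % 8 = 1 ∨ x % 8 = 2 ∨ x % 8 = 3 ∨ x % 8 = 4 ∨ x % 8 = 5 ∨
      x % 8 = 6 ∨ x % 8 = 7 := by omega
  rcases h with h | h | h | h | h | h | h | h <;> simp [pow_two, Int.mul_emod, h] <;> omega

/-- The only class of `a² + c²`, `a² + 16c²` modulo squares, for coprime `a` odd and `c` even,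
is the trivial one. -/
lemma common_factor_eq_one {a c f g t : ℤ} (ha : a % 2 = 1) (hc : c % 2 = 0)
    (hac : IsCoprime a c) (hf : a ^ 2 + c ^ 2 = t * f ^ 2)
    (hg : a ^ 2 + 16 * c ^ 2 = t * g ^ 2) : t = 1 := by
  have ht0 : 0 < t := by
    have : a ≠ 0 := by rintro rfl; simp at ha
    have : 0 < t * f ^ 2 := by rw [← hf]; positivity
    exact pos_of_mul_pos_left this (sq_nonneg f)
  have h1 : t ∣ 15 * a ^ 2 := ⟨16 * f ^ 2 - g ^ 2, by linear_combination 16 * hf - hg⟩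
  have h2 : t ∣ 15 * c ^ 2 := ⟨g ^ 2 - f ^ 2, by linear_combination hg - hf⟩
  have h15 : t ∣ 15 := by
    obtain ⟨x, y, hxy⟩ := hac.pow (m := 2) (n := 2)
    have := dvd_add (h1.mul_left x) (h2.mul_left y)
    rwa [show x * (15 * a ^ 2) + y * (15 * c ^ 2) = 15 by linear_combination 15 * hxy] at this
  have hle := Int.le_of_dvd (by norm_num) h15
  have ha8 := sq_emod_eight a
  have hc8 := sq_emod_eight c
  have hf8 := sq_emod_eight f
  have hg8 := sq_emod_eight g
  interval_cases t <;> omega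

/-- The numbers `1` and `16` are not concordant: descent for `a` odd and `c` even. -/
lemma no_concordant_one_sixteen (N : ℕ) : ∀ a c f g : ℤ, c.natAbs = N → c ≠ 0 → a % 2 = 1 →
    c % 2 = 0 → IsCoprime a c → a ^ 2 + c ^ 2 = f ^ 2 → a ^ 2 + 16 * c ^ 2 = g ^ 2 → False := by
  induction N using Nat.strong_induction_on with
  | _ N ih =>
  intro a c f g hN hc0 ha hc hac hf hg
  wlog ha4 : a % 4 = 1 generalizing a
  · exact this (-a) (by omega) hac.neg_left (by rw [neg_sq, hf]) (by rw [neg_sq, hg]) (by omega)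
  have ha0 : a ≠ 0 := by rintro rfl; simp at ha
  have hf0 : f ≠ 0 := by
    rintro rfl
    have : 0 < a ^ 2 := by positivity
    nlinarith [sq_nonneg c]
  have hg0 : g ≠ 0 := by
    rintro rfl
    have : 0 < a ^ 2 := by positivity
    nlinarith [sq_nonneg c]
  have h4 : IsCoprime a (4 * c) := by
    have h2 : IsCoprime a 2 := ⟨1, -(a / 2), by omega⟩
    have : IsCoprime a (2 * (2 * c)) := h2.mul_right (h2.mul_right hac)
    rwa [← mul_assoc] at this
  obtain ⟨u, v, hau, hcu, -, huv, -⟩ := PythagoreanTriple.coprime_classification'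
    (x := a) (y := c) (z := |f|)
    (by unfold PythagoreanTriple; rw [abs_mul_abs_self]; linear_combination hf)
    (Int.isCoprime_iff_gcd_eq_one.mp hac) ha (abs_pos.mpr hf0)
  obtain ⟨w, z, haw, hcw, -, hwz, -⟩ := PythagoreanTriple.coprime_classification'
    (x := a) (y := 4 * c) (z := |g|)
    (by unfold PythagoreanTriple; rw [abs_mul_abs_self]; linear_combination hg)
    (Int.isCoprime_iff_gcd_eq_one.mp h4) ha (abs_pos.mpr hg0)
  have hu8 := sq_emod_eight u
  have hv8 := sq_emod_eight v
  have hw8 := sq_emod_eight w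
  have hz8 := sq_emod_eight z
  have hu : u % 2 = 1 := by omega
  have hv : v % 2 = 0 := by omega
  have hw : w % 2 = 1 := by omega
  have hprod : w * z = 4 * (u * v) := by linarith
  obtain ⟨α, γ, β, hγβ, rfl, rfl⟩ : ∃ α γ β : ℤ, IsCoprime γ β ∧
      u = γ * α ∧ w = β * α := by
    have hpos : 0 < Int.gcd u w := Int.gcd_pos_of_ne_zero_left _ (by omega)
    obtain ⟨γ, β, hcop, h₁, h₂⟩ := Int.exists_gcd_one hpos
    exact ⟨Int.gcd u w, γ, β, Int.isCoprime_iff_gcd_eq_one.mpr hcop, h₁, h₂⟩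
  have hα0 : α ≠ 0 := by rintro rfl; simp at hu
  have hβ0 : β ≠ 0 := by rintro rfl; simp at hw
  have hα : α % 2 = 1 := (Int.odd_iff.mp (Int.odd_mul.mp (Int.odd_iff.mpr hu)).2)
  have hγ : γ % 2 = 1 := (Int.odd_iff.mp (Int.odd_mul.mp (Int.odd_iff.mpr hu)).1)
  have hβ : β % 2 = 1 := (Int.odd_iff.mp (Int.odd_mul.mp (Int.odd_iff.mpr hw)).1)
  have hred : β * z = 4 * γ * v := by
    apply mul_left_cancel₀ hα0
    linear_combination hprod
  have hβ2 : IsCoprime β 2 := ⟨1, -(β / 2), by omega⟩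
  obtain ⟨δ, rfl⟩ : β ∣ v := by
    have h : IsCoprime β (2 * (2 * γ)) := hβ2.mul_right (hβ2.mul_right hγβ.symm)
    exact h.dvd_of_dvd_mul_left ⟨z, by linear_combination -hred⟩
  have hz : z = 4 * γ * δ := by
    apply mul_left_cancel₀ hβ0
    linear_combination hred
  subst hz
  have hδ : δ % 2 = 0 := by
    rcases Int.even_mul.mp (Int.even_iff.mpr hv) with h | h
    · rw [Int.even_iff] at h; omega
    · exact Int.even_iff.mp h
  have hαδ : IsCoprime α δ :=
    ((Int.isCoprime_iff_gcd_eq_one.mpr huv).of_mul_left_right).of_mul_right_right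
  have hγ0 : γ ≠ 0 := by rintro rfl; simp at hγ
  have hδ0 : δ ≠ 0 := by rintro rfl; simp at hcu; exact hc0 hcu
  have hkey : γ ^ 2 * (α ^ 2 + 16 * δ ^ 2) = β ^ 2 * (α ^ 2 + δ ^ 2) := by
    linear_combination haw - hau
  obtain ⟨t, ht⟩ : γ ^ 2 ∣ α ^ 2 + δ ^ 2 := (hγβ.pow).dvd_of_dvd_mul_left ⟨_, hkey.symm⟩
  have ht' : α ^ 2 + 16 * δ ^ 2 = t * β ^ 2 := by
    apply mul_left_cancel₀ (pow_ne_zero 2 hγ0)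
    rw [hkey, ht]; ring
  have h1 : t = 1 := common_factor_eq_one hα hδ hαδ (by rw [ht, mul_comm]) ht'
  subst h1
  refine ih δ.natAbs ?_ α δ γ β rfl hδ0 hα hδ hαδ (by rw [ht, mul_one]) (by rw [ht', one_mul])
  have hc' : c = δ * (2 * (γ * α * β)) := by linear_combination hcu
  rw [← hN, hc', Int.natAbs_mul]
  have h3 : 0 < δ.natAbs := Int.natAbs_pos.mpr hδ0
  have h4 : 0 < (γ * α * β).natAbs := Int.natAbs_pos.mpr (by positivity)
  have h5 : (2 * (γ * α * β)).natAbs = 2 * (γ * α * β).natAbs := by rw [Int.natAbs_mul]; rfl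
  rw [h5]
  nlinarith

/-- Two positive integers whose product is a square have the same squarefree class. -/
lemma exists_common_factor_of_mul_eq_sq {X Y k : ℤ} (hX : 0 < X) (hY : 0 < Y)
    (h : X * Y = k ^ 2) : ∃ t f g : ℤ, X = t * f ^ 2 ∧ Y = t * g ^ 2 := by
  have hpos : 0 < Int.gcd X Y := Int.gcd_pos_of_ne_zero_left _ hX.ne'
  obtain ⟨x, y, hcop, h₁, h₂⟩ := Int.exists_gcd_one hpos
  generalize (Int.gcd X Y : ℕ) = n at *
  have ht : (0 : ℤ) < n := by exact_mod_cast hpos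
  generalize (n : ℤ) = t at *
  subst h₁ h₂
  obtain ⟨l, rfl⟩ : t ∣ k := by
    rw [← Int.pow_dvd_pow_iff two_ne_zero, ← h]
    exact ⟨x * y, by ring⟩
  have hx : 0 < x := pos_of_mul_pos_left hX ht.le
  have hy : 0 < y := pos_of_mul_pos_left hY ht.le
  have hxy : x * y = l ^ 2 := by
    apply mul_left_cancel₀ (pow_ne_zero 2 ht.ne')
    linear_combination h
  obtain ⟨f, hf | hf⟩ := Int.sq_of_gcd_eq_one hcop hxy
  · obtain ⟨g, hg | hg⟩ := Int.sq_of_gcd_eq_one (by rwa [Int.gcd_comm]) ((mul_comm y x).trans hxy)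
    · exact ⟨t, f, g, by rw [hf]; ring, by rw [hg]; ring⟩
    · nlinarith [sq_nonneg g]
  · nlinarith [sq_nonneg f]

lemma quartic_ne_sq {a b m : ℤ} (ha : a % 2 = 1) (hb : b % 4 = 0) (hb0 : b ≠ 0)
    (hab : IsCoprime a b) : m ^ 2 ≠ (4 * a ^ 2 + b ^ 2) * (a ^ 2 + 4 * b ^ 2) := by
  intro h
  obtain ⟨c, rfl⟩ : (2 : ℤ) ∣ b := by omega
  have hac : IsCoprime a c := hab.of_mul_right_right
  have ha0 : a ≠ 0 := by rintro rfl; simp at ha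
  obtain ⟨k, rfl⟩ : (2 : ℤ) ∣ m := by
    refine Int.prime_two.dvd_of_dvd_pow (n := 2) ?_
    rw [h]
    exact ⟨(2 * a ^ 2 + 2 * c ^ 2) * (a ^ 2 + 4 * (2 * c) ^ 2), by ring⟩
  have hk : (a ^ 2 + c ^ 2) * (a ^ 2 + 16 * c ^ 2) = k ^ 2 := by linarith
  obtain ⟨t, f, g, hf, hg⟩ :=
    exists_common_factor_of_mul_eq_sq (by positivity) (by positivity) hk
  have h1 := common_factor_eq_one ha (by omega) hac hf hg
  subst h1
  exact no_concordant_one_sixteen _ a c f g rfl (by omega) ha (by omega) hac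
    (by rw [hf, one_mul]) (by rw [hg, one_mul])

/-- The terms at positions `0, 1, 4, 5` of a primitive non-constant arithmetic progression are
not all squares. -/
lemma no_four_squares_zero_one_four_five {p q r s d : ℤ} (hd : d ≠ 0) (hpq : IsCoprime p q)
    (h₁ : q ^ 2 = p ^ 2 + d) (h₂ : r ^ 2 = p ^ 2 + 4 * d) (h₃ : s ^ 2 = p ^ 2 + 5 * d) :
    False := by
  have hp8 := sq_emod_eight p
  have hq8 := sq_emod_eight q
  have hr8 := sq_emod_eight r
  have hs8 := sq_emod_eight s
  have hpar : ¬ (p % 2 = 0 ∧ q % 2 = 0) := by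
    rintro ⟨hp, hq⟩
    obtain ⟨x, y, hxy⟩ := hpq
    have h := dvd_add ((Int.dvd_of_emod_eq_zero hp).mul_left x)
      ((Int.dvd_of_emod_eq_zero hq).mul_left y)
    rw [hxy] at h
    omega
  have hp : p % 2 = 1 := by omega
  have hq : q % 2 = 1 := by omega
  have hr : r % 2 = 1 := by omega
  have hs : s % 2 = 1 := by omega
  have hd8 : d % 8 = 0 := by omega
  have hpd : IsCoprime p d := by
    have := hpq.pow_right (n := 2)
    rw [h₁, add_comm, pow_two] at this
    exact IsCoprime.of_add_mul_left_right this
  have hp2 : IsCoprime p 2 := ⟨1, -(p / 2), by omega⟩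
  have hpr : IsCoprime p r := by
    rw [← IsCoprime.pow_right_iff (m := 2) two_pos, h₂, add_comm, pow_two]
    refine IsCoprime.add_mul_left_right (?_ : IsCoprime p (4 * d)) p
    have := hp2.mul_right (hp2.mul_right hpd)
    rwa [← mul_assoc] at this
  have hqd : IsCoprime q d := by
    have := hpq.symm.pow_right (n := 2)
    rw [show p ^ 2 = -d + q * q by linear_combination -h₁] at this
    exact (IsCoprime.neg_right_iff _ _).mp (IsCoprime.of_add_mul_left_right this)
  have hq2 : IsCoprime q 2 := ⟨1, -(q / 2), by omega⟩
  have hqs : IsCoprime q s := by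
    rw [← IsCoprime.pow_right_iff (m := 2) two_pos,
      show s ^ 2 = 4 * d + q * q by linear_combination h₃ - h₁]
    refine IsCoprime.add_mul_left_right (?_ : IsCoprime q (4 * d)) q
    have := hq2.mul_right (hq2.mul_right hqd)
    rwa [← mul_assoc] at this
  have hrd : IsCoprime r d := by
    obtain ⟨x, y, hxy⟩ := (hpd.pow_left (m := 2))
    have : IsCoprime (r ^ 2) d := ⟨x, y - 4 * x, by rw [h₂]; linear_combination hxy⟩
    exact (IsCoprime.pow_left_iff two_pos).mp this
  have hrs : IsCoprime r s := by
    rw [← IsCoprime.pow_right_iff (m := 2) two_pos,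
      show s ^ 2 = d + r * r by linear_combination h₃ - h₂]
    exact IsCoprime.add_mul_left_right hrd r
  have hcop : IsCoprime (p * s) (q * r) :=
    (hpq.mul_right hpr).mul_left (hqs.symm.mul_right hrs.symm)
  have hpyth : (p * s) ^ 2 + (2 * d) ^ 2 = (q * r) ^ 2 := by
    rw [mul_pow, mul_pow q, h₁, h₂, h₃]; ring
  have hcop' : IsCoprime (p * s) (2 * d) := by
    refine (IsCoprime.pow_right_iff (m := 2) two_pos).mp ?_
    rw [show (2 * d) ^ 2 = (q * r) ^ 2 + (p * s) * (-(p * s)) by linear_combination hpyth]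
    exact IsCoprime.add_mul_left_right hcop.pow_right _
  have hps : p * s % 2 = 1 := by rw [Int.mul_emod, hp, hs]; rfl
  have hqr0 : q * r ≠ 0 := mul_ne_zero (by rintro rfl; simp at hq) (by rintro rfl; simp at hr)
  obtain ⟨a, b, hps', hd', -, hab, hpar'⟩ := PythagoreanTriple.coprime_classification'
    (x := p * s) (y := 2 * d) (z := |q * r|)
    (by unfold PythagoreanTriple; rw [abs_mul_abs_self]; linear_combination hpyth)
    (Int.isCoprime_iff_gcd_eq_one.mp hcop') hps (abs_pos.mpr hqr0)
  have hdab : d = a * b := by linarith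
  have hm : (p ^ 2 + s ^ 2) ^ 2 = (4 * a ^ 2 + b ^ 2) * (a ^ 2 + 4 * b ^ 2) := by
    have h5 : s ^ 2 - p ^ 2 = 5 * (a * b) := by rw [h₃, hdab]; ring
    linear_combination (s ^ 2 - p ^ 2 + 5 * (a * b)) * h5 + 4 * (p * s + (a ^ 2 - b ^ 2)) * hps'
  have ha0 : a ≠ 0 := by rintro rfl; simp at hdab; exact hd hdab
  have hb0 : b ≠ 0 := by rintro rfl; simp at hdab; exact hd hdab
  have hcab : IsCoprime a b := Int.isCoprime_iff_gcd_eq_one.mpr hab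
  have hdvd : (4 : ℤ) ∣ a * b := by omega
  have h4 {x : ℤ} (hx : x % 2 = 1) : IsCoprime (4 : ℤ) x := by
    have h2 : IsCoprime (2 : ℤ) x := ⟨-(x / 2), 1, by omega⟩
    exact h2.mul_left h2
  rcases hpar' with ⟨-, hb⟩ | ⟨ha, -⟩
  · exact quartic_ne_sq hb (Int.emod_eq_zero_of_dvd ((h4 hb).dvd_of_dvd_mul_right hdvd)) ha0
      hcab.symm (hm.trans (by ring))
  · exact quartic_ne_sq ha (Int.emod_eq_zero_of_dvd ((h4 ha).dvd_of_dvd_mul_left hdvd)) hb0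
      hcab hm

/-- For a prime `n ≥ 7`, there is no primitive non-constant arithmetic progression
of integers of the form `x₁², x₂², x₃ⁿ, x₄ⁿ, x₅², x₆²`. -/
theorem no_AP_22nn22 (n : ℕ) (hn : n.Prime) (hn7 : 7 ≤ n) :
    ¬ ∃ (x₁ x₂ x₃ x₄ x₅ x₆ d : ℤ), d ≠ 0 ∧
      Int.gcd (x₁ ^ 2) (x₂ ^ 2) = 1 ∧
      x₂ ^ 2 - x₁ ^ 2 = d ∧
      x₃ ^ n - x₂ ^ 2 = d ∧
      x₄ ^ n - x₃ ^ n = d ∧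
      x₅ ^ 2 - x₄ ^ n = d ∧
      x₆ ^ 2 - x₅ ^ 2 = d := by
  rintro ⟨p, q, x, y, r, s, d, hd, hgcd, h₁, h₂, h₃, h₄, h₅⟩
  refine no_four_squares_zero_one_four_five (p := p) (q := q) (r := r) (s := s) hd ?_
    (by linarith) (by linarith) (by linarith)
  rw [← IsCoprime.pow_iff (m := 2) (n := 2) two_pos two_pos]
  exact Int.isCoprime_iff_gcd_eq_one.mpr hgcd
end
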